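/- arXiv:2104.13222 — 4 statements merged into one kernel-verified Lean document; each statement's English description precedes it below -/
import Mathlib

section
/- Fix n ≥ 1 and let P_n denote the path with n edges (on n+1 vertices). The class K({P_n}) of all finite graphs admitting no injective graph homomorphism from P_n has the weak amalgamation property. -/
open SimpleGraph

/-- `A` is contained in `G`: there is an injective graph homomorphism from `A` to `G`. -/
def Contains {V W : Type} (A : SimpleGraph V) (G : SimpleGraph W) : Prop :=
  ∃ f : A →g G, Function.Injective f

/-- The class of finite graphs satisfying `P` has the weak amalgamation property (WAP):
for every finite `A` with `P A` there are a finite `A'` with `P A'` and a graph embedding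
`i : A ↪g A'` such that any two finite extensions `B`, `C` of `A'` in the class
amalgamate over (the image of) `A`. -/
def GraphWAP (P : ∀ α : Type, SimpleGraph α → Prop) : Prop :=
  ∀ (α : Type) [Fintype α], ∀ A : SimpleGraph α, P α A →
    ∃ (β : Type) (_ : Fintype β) (A' : SimpleGraph β) (i : A ↪g A'), P β A' ∧
      ∀ (γ : Type) [Fintype γ], ∀ B : SimpleGraph γ, P γ B →
        ∀ (δ : Type) [Fintype δ], ∀ C : SimpleGraph δ, P δ C →
          ∀ (f : A' ↪g B) (g : A' ↪g C),
            ∃ (ε : Type) (_ : Fintype ε) (D : SimpleGraph ε), P ε D ∧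
              ∃ (f' : B ↪g D) (g' : C ↪g D),
                ∀ a : α, f' (f (i a)) = g' (g (i a))

namespace PathFreeWAP

/-- Finite graphs with vertices labelled by `L`. -/
structure LG (L : Type) where
  V : Type
  fin : Finite V
  G : SimpleGraph V
  lab : V → L

/-- Label-preserving induced embedding. -/
def LG.le {L : Type} (X Y : LG L) : Prop :=
  ∃ f : X.G ↪g Y.G, ∀ v, Y.lab (f v) = X.lab v

instance (L : Type) : IsPreorder (LG L) LG.le where
  refl X := ⟨RelEmbedding.refl _, fun _ => rfl⟩
  trans X Y Z := by
    rintro ⟨f, hf⟩ ⟨g, hg⟩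
    refine ⟨f.trans g, fun v => ?_⟩
    rw [← hf v, ← hg (f v)]
    rfl

def LG.restrict {L : Type} (X : LG L) (s : Set X.V) : LG L where
  V := s
  fin := by
    have := X.fin
    infer_instance
  G := X.G.induce s
  lab v := X.lab v

/-- Remove the root and remember adjacency to it. -/
def LG.del {L : Type} (X : LG L) (r : X.V) : LG (L × Prop) where
  V := {v | v ≠ r}
  fin := by
    have := X.fin
    infer_instance
  G := X.G.induce {v | v ≠ r}
  lab v := (X.lab v, X.G.Adj r v)

def IsRoot {L : Type} (d : ℕ) (X : LG L) (r : X.V) : Prop :=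
  (∀ v, X.G.Reachable r v) ∧ ∀ v (p : X.G.Walk r v), p.IsPath → p.length < d

def RC (L : Type) (d : ℕ) : Set (LG L) := {X | ∃ r, IsRoot d X r}

def FC (L : Type) (d : ℕ) : Set (LG L) :=
  {X | ∀ c : X.G.ConnectedComponent, X.restrict c.supp ∈ RC L d}

lemma match_of_sublist {A B T : Type*} (R : T → T → Prop) (f : A → T) (g : B → T) (l₂ : List B) :
    ∀ l₁ : List A, l₂.Nodup → List.SublistForall₂ R (l₁.map f) (l₂.map g) →
      ∃ S : A → B → Prop, (∀ a ∈ l₁, ∃ b, S a b) ∧ (∀ a b, S a b → b ∈ l₂ ∧ R (f a) (g b)) ∧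
        ∀ a a' b, S a b → S a' b → a = a' := by
  induction l₂ with
  | nil =>
    intro l₁ _ h
    cases l₁ with
    | nil => exact ⟨fun _ _ => False, by simp, by simp, by simp⟩
    | cons a l => simp only [List.map_cons, List.map_nil] at h; cases h
  | cons b l₂ ih =>
    intro l₁ hnd h
    rw [List.nodup_cons] at hnd
    have key : List.SublistForall₂ R (l₁.map f) (l₂.map g) ∨
        ∃ a l, l₁ = a :: l ∧ R (f a) (g b) ∧ List.SublistForall₂ R (l.map f) (l₂.map g) := by
      cases l₁ with
      | nil => exact Or.inl .nil
      | cons a l =>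
        simp only [List.map_cons] at h
        cases h with
        | cons h1 h2 => exact Or.inr ⟨a, l, rfl, h1, h2⟩
        | cons_right h => exact Or.inl h
    rcases key with h | ⟨a, l, rfl, hr, h⟩
    · obtain ⟨S, h1, h2, h3⟩ := ih _ hnd.2 h
      exact ⟨S, h1, fun a b hh => ⟨List.mem_cons_of_mem _ (h2 a b hh).1, (h2 a b hh).2⟩, h3⟩
    · obtain ⟨S, h1, h2, h3⟩ := ih _ hnd.2 h
      refine ⟨fun x y => S x y ∨ (x = a ∧ y = b), ?_, ?_, ?_⟩
      · intro x hx
        rcases List.mem_cons.1 hx with rfl | hx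
        · exact ⟨b, Or.inr ⟨rfl, rfl⟩⟩
        · obtain ⟨y, hy⟩ := h1 x hx
          exact ⟨y, Or.inl hy⟩
      · rintro x y (hh | ⟨rfl, rfl⟩)
        · exact ⟨List.mem_cons_of_mem _ (h2 x y hh).1, (h2 x y hh).2⟩
        · exact ⟨List.mem_cons_self, hr⟩
      · rintro x x' y (hh | ⟨rfl, rfl⟩) (h' | ⟨h', h''⟩)
        · exact h3 _ _ _ hh h'
        · subst h''; exact absurd (h2 _ _ hh).1 hnd.1
        · exact absurd (h2 _ _ h').1 hnd.1
        · exact h'.symm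

/-- Gluing embeddings of components. -/
lemma glue {L : Type} (X Y : LG L)
    (φ : X.G.ConnectedComponent → Y.G.ConnectedComponent) (hφ : Function.Injective φ)
    (h : ∀ c, (X.restrict c.supp).le (Y.restrict (φ c).supp)) : X.le Y := by
  choose e he using h
  let F : ∀ c : X.G.ConnectedComponent, c.supp → (φ c).supp := fun c v => e c v
  have hF : ∀ c v, Y.G.connectedComponentMk (F c v).1 = φ c := fun c v => (F c v).2
  have hadj : ∀ c (v w : c.supp), Y.G.Adj (F c v).1 (F c w).1 ↔ X.G.Adj v.1 w.1 :=
    fun c v w => (e c).map_rel_iff (a := v) (b := w)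
  have hinj : ∀ c (v w : c.supp), F c v = F c w → v = w := fun c v w h => (e c).injective h
  have hlab : ∀ c (v : c.supp), Y.lab (F c v).1 = X.lab v.1 := fun c v => he c v
  let g : X.V → Y.V := fun v => (F (X.G.connectedComponentMk v) ⟨v, rfl⟩).1
  have hg : ∀ c (v : X.V) (hv : X.G.connectedComponentMk v = c), g v = (F c ⟨v, hv⟩).1 := by
    rintro c v rfl; rfl
  have hgc : ∀ v, Y.G.connectedComponentMk (g v) = φ (X.G.connectedComponentMk v) :=
    fun v => hF _ _
  have ginj : Function.Injective g := by
    intro v w hvw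
    have h1 : X.G.connectedComponentMk v = X.G.connectedComponentMk w := by
      apply hφ; rw [← hgc, ← hgc, hvw]
    rw [hg _ v h1, hg _ w rfl] at hvw
    exact congrArg Subtype.val (hinj _ _ _ (Subtype.ext hvw))
  refine ⟨⟨⟨g, ginj⟩, ?_⟩, fun v => hlab _ _⟩
  intro v w
  change Y.G.Adj (g v) (g w) ↔ X.G.Adj v w
  by_cases h1 : X.G.connectedComponentMk v = X.G.connectedComponentMk w
  · rw [hg _ v h1, hg _ w rfl]
    exact hadj _ _ _
  · constructor
    · intro h
      exfalso; apply h1; apply hφ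
      rw [← hgc, ← hgc]
      exact ConnectedComponent.sound h.reachable
    · intro h
      exact absurd (ConnectedComponent.sound h.reachable) h1

lemma FC_of_RC {L : Type} {d : ℕ} (h : (RC L d).PartiallyWellOrderedOn LG.le) :
    (FC L d).PartiallyWellOrderedOn LG.le := by
  have H := h.partiallyWellOrderedOn_sublistForall₂ LG.le
  rw [Set.partiallyWellOrderedOn_iff_exists_lt] at H ⊢
  intro X hX
  have hfin : ∀ k, Finite (X k).G.ConnectedComponent := fun k => by
    have := (X k).fin
    exact Quot.finite _
  have hl : ∀ k, ∃ l : List (X k).G.ConnectedComponent, l.Nodup ∧ ∀ c, c ∈ l := fun k => by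
    have := Fintype.ofFinite (X k).G.ConnectedComponent
    exact ⟨Finset.univ.toList, Finset.nodup_toList _, fun c => by simp⟩
  choose l hnd hmem using hl
  obtain ⟨m, k, hmk, hs⟩ := H (fun k => (l k).map fun c => (X k).restrict c.supp) (by
    intro k x hx
    obtain ⟨c, _, rfl⟩ := List.mem_map.1 hx
    exact hX k c)
  refine ⟨m, k, hmk, ?_⟩
  obtain ⟨S, h1, h2, h3⟩ := match_of_sublist _ _ _ _ _ (hnd k) hs
  choose φ hφ using fun c => h1 c (hmem m c)
  exact glue _ _ φ (fun a b hab => h3 a b (φ a) (hφ a) (hab ▸ hφ b)) fun c => (h2 _ _ (hφ c)).2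

lemma del_mem {L : Type} {d : ℕ} (X : LG L) (r : X.V) (h : IsRoot (d + 1) X r) :
    X.del r ∈ FC (L × Prop) d := by
  intro c
  obtain ⟨u, hu⟩ := c.nonempty_supp
  have hw : ∃ w : (X.del r).V, w ∈ c.supp ∧ X.G.Adj r w.1 := by
    obtain ⟨p, hp⟩ := (h.1 u.1).exists_isPath
    have hur : u.1 ≠ r := u.2
    generalize hu' : u.1 = u' at p hur
    cases p with
    | nil => exact absurd rfl hur
    | @cons _ w _ hadj p =>
      rw [Walk.cons_isPath_iff] at hp
      have hs : ∀ x ∈ p.support, x ∈ {v | v ≠ r} := by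
        rintro x hx rfl; exact hp.2 hx
      refine ⟨⟨w, hs _ p.start_mem_support⟩, ?_, hadj⟩
      subst hu'
      have hr : (X.del r).G.Reachable ⟨w, hs _ p.start_mem_support⟩ u := ⟨p.induce _ hs⟩
      rw [← hu]
      exact ConnectedComponent.sound hr
  obtain ⟨w, hwc, hadj⟩ := hw
  refine ⟨⟨w, hwc⟩, fun v => c.connected_toSimpleGraph.preconnected _ v, ?_⟩
  intro v p hp
  let e1 : ((X.del r).restrict c.supp).G ↪g (X.del r).G := Embedding.induce _
  let e2 : (X.del r).G ↪g X.G := Embedding.induce _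
  let q := (p.map e1.toHom).map e2.toHom
  have hq : q.IsPath := Walk.IsPath.map e2.injective
    (Walk.IsPath.map e1.injective hp)
  have hrq : r ∉ q.support := by
    intro hr
    rw [Walk.support_map] at hr
    obtain ⟨x, _, hx⟩ := List.mem_map.1 hr
    exact x.2 hx
  have := h.2 _ (Walk.cons (show X.G.Adj r _ from hadj) q) ((Walk.cons_isPath_iff _ _).2 ⟨hq, hrq⟩)
  have this : q.length + 1 < d + 1 := this
  have hl : q.length = p.length := (Walk.length_map _ _).trans (Walk.length_map _ _)
  omega

lemma le_of_del {L : Type} (X Y : LG L) (r : X.V) (s : Y.V) (hl : X.lab r = Y.lab s)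
    (h : (X.del r).le (Y.del s)) : X.le Y := by
  classical
  obtain ⟨f, hf⟩ := h
  let F : {v | v ≠ r} → {v | v ≠ s} := fun v => f v
  have hinj : ∀ v w, F v = F w → v = w := fun v w h => f.injective h
  have hadj : ∀ v w, Y.G.Adj (F v).1 (F w).1 ↔ X.G.Adj v.1 w.1 :=
    fun v w => f.map_rel_iff (a := v) (b := w)
  have hlab : ∀ v, Y.lab (F v).1 = X.lab v.1 := fun v => congrArg Prod.fst (hf v)
  have hrt : ∀ v, Y.G.Adj s (F v).1 ↔ X.G.Adj r v.1 := fun v => iff_of_eq (congrArg Prod.snd (hf v))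
  let g : X.V → Y.V := fun v => if h : v = r then s else (F ⟨v, h⟩).1
  have g1 : g r = s := by simp [g]
  have g2 : ∀ v (h : v ≠ r), g v = (F ⟨v, h⟩).1 := fun v h => by simp [g, h]
  have ginj : Function.Injective g := by
    intro v w hvw
    by_cases hv : v = r <;> by_cases hw : w = r
    · rw [hv, hw]
    · subst hv; rw [g1, g2 _ hw] at hvw; exact absurd hvw.symm (F ⟨w, hw⟩).2
    · subst hw; rw [g1, g2 _ hv] at hvw; exact absurd hvw (F ⟨v, hv⟩).2
    · rw [g2 _ hv, g2 _ hw] at hvw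
      exact congrArg Subtype.val (hinj _ _ (Subtype.ext hvw))
  refine ⟨⟨⟨g, ginj⟩, ?_⟩, ?_⟩
  · intro v w
    change Y.G.Adj (g v) (g w) ↔ X.G.Adj v w
    by_cases hv : v = r <;> by_cases hw : w = r
    · subst hv; subst hw; simp
    · subst hv; rw [g1, g2 _ hw]; exact hrt ⟨w, hw⟩
    · subst hw; rw [g1, g2 _ hv, Y.G.adj_comm, X.G.adj_comm]; exact hrt ⟨v, hv⟩
    · rw [g2 _ hv, g2 _ hw]; exact hadj _ _
  · intro v
    change Y.lab (g v) = X.lab v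
    by_cases hv : v = r
    · subst hv; rw [g1, hl]
    · rw [g2 _ hv]; exact hlab _

lemma RC_pwo (d : ℕ) : ∀ (L : Type) [Finite L], (RC L d).PartiallyWellOrderedOn LG.le := by
  induction d with
  | zero =>
    intro L _
    rw [Set.partiallyWellOrderedOn_iff_exists_lt]
    intro X hX
    obtain ⟨r, hr⟩ := hX 0
    exact absurd (hr.2 r Walk.nil Walk.IsPath.nil) (by simp)
  | succ d ih =>
    intro L _
    have H := FC_of_RC (ih (L × Prop))
    have H2 := (Set.finite_univ (α := L)).partiallyWellOrderedOn (r := Eq)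
    have H3 := H2.prod H
    rw [Set.partiallyWellOrderedOn_iff_exists_lt] at H3 ⊢
    intro X hX
    choose r hr using hX
    obtain ⟨m, k, hmk, h⟩ := H3 (fun k => ((X k).lab (r k), (X k).del (r k)))
      (fun k => ⟨Set.mem_univ _, del_mem _ _ (hr k)⟩)
    exact ⟨m, k, hmk, le_of_del _ _ _ _ h.1 h.2⟩

lemma FC_of_pathFree {L : Type} (n : ℕ) (X : LG L)
    (h : ¬ Contains (SimpleGraph.pathGraph (n + 1)) X.G) : X ∈ FC L n := by
  intro c
  obtain ⟨u, hu⟩ := c.nonempty_supp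
  refine ⟨⟨u, hu⟩, fun v => c.connected_toSimpleGraph.preconnected _ v, ?_⟩
  intro v p hp
  by_contra hlt
  rw [not_lt] at hlt
  apply h
  let e1 : (X.restrict c.supp).G ↪g X.G := Embedding.induce _
  refine ⟨⟨fun i => e1 (p.getVert i), ?_⟩, ?_⟩
  · intro a b hab
    rw [e1.map_adj_iff]
    rw [pathGraph_adj] at hab
    rcases hab with hab | hab
    · rw [← hab]; exact p.adj_getVert_succ (by omega)
    · rw [← hab]; exact (p.adj_getVert_succ (by omega)).symm
  · intro a b hab
    have := e1.injective hab
    have := hp.getVert_injOn (by simp; omega) (by simp; omega) this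
    exact Fin.ext this

/-- Extensions of `A` in the class. -/
structure Ext (n : ℕ) {α : Type} (A : SimpleGraph α) where
  V : Type
  fin : Fintype V
  G : SimpleGraph V
  i : A ↪g G
  free : ¬ Contains (SimpleGraph.pathGraph (n + 1)) G

def Ext.le {n : ℕ} {α : Type} {A : SimpleGraph α} (X Y : Ext n A) : Prop :=
  ∃ f : X.G ↪g Y.G, ∀ a, f (X.i a) = Y.i a

lemma Ext.le_trans {n : ℕ} {α : Type} {A : SimpleGraph α} {X Y Z : Ext n A}
    (h : X.le Y) (h' : Y.le Z) : X.le Z := by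
  obtain ⟨f, hf⟩ := h
  obtain ⟨g, hg⟩ := h'
  exact ⟨f.trans g, fun a => by rw [← hg, ← hf]; rfl⟩

lemma ext_wqo {n : ℕ} {α : Type} [Finite α] {A : SimpleGraph α} (X : ℕ → Ext n A) :
    ∃ m k, m < k ∧ (X m).le (X k) := by
  have H := FC_of_RC (RC_pwo n (Set α))
  rw [Set.partiallyWellOrderedOn_iff_exists_lt] at H
  obtain ⟨m, k, hmk, f, hf⟩ := H (fun k => ⟨(X k).V, @Finite.of_fintype _ (X k).fin, (X k).G,
    fun v => {a | (X k).i a = v}⟩) (fun k => FC_of_pathFree n _ (X k).free)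
  refine ⟨m, k, hmk, f, fun a => ?_⟩
  have h1 : a ∈ {b | (X m).i b = (X m).i a} := rfl
  have h2 := hf ((X m).i a)
  have h3 : a ∈ {b | (X k).i b = f ((X m).i a)} := by
    have h4 : {b | (X k).i b = f ((X m).i a)} = {b | (X m).i b = (X m).i a} := h2
    rw [h4]
    exact h1
  exact h3.symm

end PathFreeWAP

open PathFreeWAP in
/-- For `n ≥ 1`, the class of all finite graphs not containing the path with `n` edges
(i.e. the path graph on `n + 1` vertices) has the weak amalgamation property. -/
theorem pathFree_wap (n : ℕ) (hn : 1 ≤ n) :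
    GraphWAP (fun _ G => ¬ Contains (SimpleGraph.pathGraph (n + 1)) G) := by
  intro α _ A hA
  by_contra hcon
  have step : ∀ E : Ext n A, ∃ B C : Ext n A, E.le B ∧ E.le C ∧
      ∀ D : Ext n A, ¬ (B.le D ∧ C.le D) := by
    intro E
    by_contra hE
    apply hcon
    refine ⟨E.V, E.fin, E.G, E.i, E.free, ?_⟩
    intro γ _ B hB δ _ C hC f g
    by_contra hD
    apply hE
    refine ⟨⟨γ, inferInstance, B, E.i.trans f, hB⟩, ⟨δ, inferInstance, C, E.i.trans g, hC⟩,
      ⟨f, fun _ => rfl⟩, ⟨g, fun _ => rfl⟩, ?_⟩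
    rintro D ⟨⟨f', hf'⟩, ⟨g', hg'⟩⟩
    exact hD ⟨D.V, D.fin, D.G, D.free, f', g', fun a => (hf' a).trans (hg' a).symm⟩
  choose B C hB hC hBC using step
  let E0 : Ext n A := ⟨α, inferInstance, A, RelEmbedding.refl _, hA⟩
  let X : ℕ → Ext n A := fun k => C^[k] E0
  have hX : ∀ k, X (k + 1) = C (X k) := fun k => Function.iterate_succ_apply' C k E0
  obtain ⟨m, k, hmk, h⟩ := ext_wqo (fun k => B (X k))
  have hle : ∀ j, m + 1 ≤ j → (X (m + 1)).le (X j) := by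
    intro j hj
    induction j, hj using Nat.le_induction with
    | base => exact ⟨RelEmbedding.refl _, fun _ => rfl⟩
    | succ j hj ih =>
      rw [hX j]
      exact Ext.le_trans ih (hC _)
  apply hBC (X m) (B (X k))
  refine ⟨h, ?_⟩
  rw [← hX]
  exact Ext.le_trans (hle k hmk) (hB _)
end

section
/- Let N be a near path, i.e., a finite graph that is either a path or is obtained from a path by adding one new vertex adjacent to exactly one vertex of the path. Then the class K({N}) of all finite graphs admitting no injective graph homomorphism from N has the weak amalgamation property. -/
open SimpleGraph

/-- The near path obtained from the path graph on `m` vertices by adding one new vertex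
(`Sum.inr ()`) adjacent exactly to the vertex `k` of the path. -/
def nearPath (m : ℕ) (k : Fin m) : SimpleGraph (Fin m ⊕ Unit) :=
  SimpleGraph.fromRel fun a b =>
    (∃ i j : Fin m, a = Sum.inl i ∧ b = Sum.inl j ∧ (i : ℕ) + 1 = (j : ℕ)) ∨
    (a = Sum.inl k ∧ b = Sum.inr ())

/-- `p` is a path in `G` on the integer interval `[-M, M]`. -/
def ZPath {W : Type} (G : SimpleGraph W) (p : ℤ → W) (M : ℤ) : Prop :=
  (∀ i j, -M ≤ i → i ≤ M → -M ≤ j → j ≤ M → p i = p j → i = j) ∧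
    ∀ j, -M ≤ j → j < M → G.Adj (p j) (p (j + 1))

/-- The abstract properties of near paths that are used in the proof. -/
structure GoodN {V : Type} (N : SimpleGraph V) (n : ℤ) : Prop where
  pre : N.Preconnected
  fin : Finite V
  card : (Nat.card V : ℤ) ≤ n
  pos : 1 ≤ n
  br : ∀ {W : Type} (G : SimpleGraph W) (p : ℤ → W) (w : W), ZPath G p n →
    G.Adj (p 0) w → w ≠ p 1 → w ≠ p (-1) → Contains N G

theorem Contains.of_iso {V V' W : Type} {N : SimpleGraph V} {N' : SimpleGraph V'}
    {G : SimpleGraph W} (e : N ≃g N') (h : Contains N' G) : Contains N G := by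
  obtain ⟨f, hf⟩ := h
  exact ⟨f.comp e.toHom, hf.comp e.injective⟩

theorem GoodN.of_iso {V V' : Type} {N : SimpleGraph V} {N' : SimpleGraph V'} {n : ℤ}
    (e : N ≃g N') (h : GoodN N' n) : GoodN N n where
  pre := e.preconnected_iff.2 h.pre
  fin := by
    have := h.fin
    exact Finite.of_equiv _ e.toEquiv.symm
  card := by
    rw [Nat.card_congr e.toEquiv]; exact h.card
  pos := h.pos
  br := fun G p w hp ha h1 h2 => (h.br G p w hp ha h1 h2).of_iso e

theorem good_path (m : ℕ) : GoodN (pathGraph m) (m + 1) where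
  pre := pathGraph_preconnected m
  fin := inferInstance
  card := by simp
  pos := by omega
  br := by
    intro W G p w hp ha h1 h2
    refine ⟨⟨fun i => p (i : ℕ), ?_⟩, ?_⟩
    · intro i j hij
      have hi := i.2
      have hj := j.2
      rw [pathGraph_adj] at hij
      rcases hij with h | h
      · rw [← h]; push_cast
        exact hp.2 _ (by omega) (by omega)
      · rw [← h]; push_cast
        exact (hp.2 _ (by omega) (by omega)).symm
    · intro i j hij
      have hi := i.2
      have hj := j.2
      have := hp.1 _ _ (by omega) (by omega) (by omega) (by omega) hij
      apply Fin.ext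
      omega

/-- Build a copy of a near path from data. -/
theorem contains_nearPath {W : Type} (m : ℕ) (k : Fin m) (G : SimpleGraph W) (s : ℕ → W) (w : W)
    (hinj : ∀ i j, i < m → j < m → s i = s j → i = j)
    (hadj : ∀ i, i + 1 < m → G.Adj (s i) (s (i + 1)))
    (hw : G.Adj (s k) w) (hne : ∀ i, i < m → s i ≠ w) : Contains (nearPath m k) G := by
  have key : ∀ a b : Fin m ⊕ Unit,
      ((∃ i j : Fin m, a = Sum.inl i ∧ b = Sum.inl j ∧ (i : ℕ) + 1 = (j : ℕ)) ∨
        (a = Sum.inl k ∧ b = Sum.inr ())) →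
      G.Adj (Sum.elim (fun i : Fin m => s i) (fun _ => w) a)
        (Sum.elim (fun i : Fin m => s i) (fun _ => w) b) := by
    rintro a b (⟨i, j, rfl, rfl, h⟩ | ⟨rfl, rfl⟩)
    · have hj := j.2
      simp only [Sum.elim_inl, ← h]
      exact hadj _ (by omega)
    · exact hw
  refine ⟨⟨Sum.elim (fun i : Fin m => s i) (fun _ => w), ?_⟩, ?_⟩
  · intro a b hab
    rw [nearPath, fromRel_adj] at hab
    rcases hab.2 with h | h
    · exact key _ _ h
    · exact (key _ _ h).symm
  · rintro (i | i) (j | j) hij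
    · have := hinj i j i.2 j.2 hij
      rw [Fin.ext this]
    · exact absurd hij (hne i i.2)
    · exact absurd hij.symm (hne j j.2)
    · rfl

theorem good_nearPath (m : ℕ) (k : Fin m) : GoodN (nearPath m k) (2 * m + 2) where
  pre := by
    have key : ∀ i : ℕ, ∀ hi : i < m, (nearPath m k).Reachable (Sum.inl ⟨0, by omega⟩)
        (Sum.inl ⟨i, hi⟩) := by
      intro i
      induction i with
      | zero => intro _; rfl
      | succ i ih =>
        intro hi
        refine (ih (by omega)).trans (Adj.reachable ?_)
        rw [nearPath, fromRel_adj]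
        refine ⟨by simp, Or.inl (Or.inl ⟨_, _, rfl, rfl, rfl⟩)⟩
    have key2 : ∀ x, (nearPath m k).Reachable (Sum.inl ⟨0, by have := k.2; omega⟩) x := by
      rintro (i | i)
      · exact key i i.2
      · refine (key k k.2).trans (Adj.reachable ?_)
        rw [nearPath, fromRel_adj]
        exact ⟨by simp, Or.inl (Or.inr ⟨rfl, rfl⟩)⟩
    exact fun x y => (key2 x).symm.trans (key2 y)
  fin := inferInstance
  card := by simp; omega
  pos := by omega
  br := by
    intro W G p w hp ha h1 h2
    have hk := k.2
    by_cases hw : ∃ j : ℤ, -m ≤ j ∧ j ≤ m ∧ p j = w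
    · obtain ⟨j, hj1, hj2, rfl⟩ := hw
      have hj0 : j ≠ 0 := by rintro rfl; exact ha.ne rfl
      have hj3 : j ≠ 1 := by rintro rfl; exact h1 rfl
      have hj4 : j ≠ -1 := by rintro rfl; exact h2 rfl
      have a1 := hp.2 0 (by omega) (by omega)
      have a2 := hp.2 (-1) (by omega) (by omega)
      rw [zero_add] at a1
      rw [neg_add_cancel] at a2
      rcases lt_or_gt_of_ne hj0 with hj | hj
      · refine contains_nearPath m k G
          (fun i => p (if (i : ℤ) < k then j - (k - i - 1) else i - k)) (p (-1)) ?_ ?_ ?_ ?_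
        · intro a b ha hb hab
          have := hp.1 _ _ (by split_ifs <;> omega) (by split_ifs <;> omega)
            (by split_ifs <;> omega) (by split_ifs <;> omega) hab
          split_ifs at this <;> omega
        · intro i hi
          rcases lt_trichotomy ((i : ℤ) + 1) k with h | h | h
          · simp only [Nat.cast_add, Nat.cast_one]
            rw [if_pos (by omega), if_pos (by omega)]
            have := hp.2 (j - (k - i - 1)) (by omega) (by omega)
            convert this using 2
            ring
          · simp only [Nat.cast_add, Nat.cast_one]
            rw [if_pos (by omega), if_neg (by omega)]
            convert ha.symm using 2 <;> omega
          · simp only [Nat.cast_add, Nat.cast_one]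
            rw [if_neg (by omega), if_neg (by omega)]
            have := hp.2 (i - k) (by omega) (by omega)
            convert this using 2
            ring
        · simpa using a2.symm
        · intro i hi hab
          have := hp.1 _ _ (by split_ifs <;> omega) (by split_ifs <;> omega)
            (by omega) (by omega) hab
          split_ifs at this <;> omega
      · refine contains_nearPath m k G
          (fun i => p (if (k : ℤ) < i then j + (i - k - 1) else i - k)) (p 1) ?_ ?_ ?_ ?_
        · intro a b ha hb hab
          have := hp.1 _ _ (by split_ifs <;> omega) (by split_ifs <;> omega)
            (by split_ifs <;> omega) (by split_ifs <;> omega) hab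
          split_ifs at this <;> omega
        · intro i hi
          rcases lt_trichotomy (i : ℤ) k with h | h | h
          · simp only [Nat.cast_add, Nat.cast_one]
            rw [if_neg (by omega), if_neg (by omega)]
            have := hp.2 (i - k) (by omega) (by omega)
            convert this using 2
            ring
          · simp only [Nat.cast_add, Nat.cast_one]
            rw [if_neg (by omega), if_pos (by omega)]
            convert ha using 2 <;> omega
          · simp only [Nat.cast_add, Nat.cast_one]
            rw [if_pos (by omega), if_pos (by omega)]
            have := hp.2 (j + (i - k - 1)) (by omega) (by omega)
            convert this using 2
            ring
        · simpa using a1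
        · intro i hi hab
          have := hp.1 _ _ (by split_ifs <;> omega) (by split_ifs <;> omega)
            (by omega) (by omega) hab
          split_ifs at this <;> omega
    · refine contains_nearPath m k G (fun i => p (i - k)) w ?_ ?_ ?_ ?_
      · intro a b ha hb hab
        have := hp.1 _ _ (by omega) (by omega) (by omega) (by omega) hab
        omega
      · intro i hi
        have := hp.2 (i - k) (by omega) (by omega)
        convert this using 2
        push_cast
        ring
      · simpa using ha
      · intro i hi h
        exact hw ⟨_, by omega, by omega, h⟩

theorem ZPath.nbr {V W : Type} {N : SimpleGraph V} {n : ℤ} (hN : GoodN N n) {G : SimpleGraph W}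
    (hG : ¬ Contains N G) {p : ℤ → W} {M : ℤ} (hp : ZPath G p M) (j : ℤ) (h1 : -M ≤ j - n)
    (h2 : j + n ≤ M) (w : W) (hw : G.Adj (p j) w) : w = p (j + 1) ∨ w = p (j - 1) := by
  by_contra hcon
  push Not at hcon
  refine hG (hN.br G (fun i => p (j + i)) w ⟨?_, ?_⟩ (by simpa using hw) hcon.1
    (by simpa [sub_eq_add_neg] using hcon.2))
  · intro a b ha1 ha2 hb1 hb2 hab
    have := hp.1 _ _ (by omega) (by omega) (by omega) (by omega) hab
    omega
  · intro a ha1 ha2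
    have := hp.2 (j + a) (by omega) (by omega)
    simpa [add_assoc] using this

theorem ball_lemma {W : Type} {G : SimpleGraph W} (q : ℤ → W) (d : ℕ)
    (hn : ∀ j : ℤ, -d < j → j < d → ∀ w, G.Adj (q j) w → w = q (j + 1) ∨ w = q (j - 1))
    (w : ℕ → W) (h0 : w 0 = q 0) (hw : ∀ i, i < d → G.Adj (w i) (w (i + 1))) :
    ∀ i, i ≤ d → ∃ j : ℤ, -i ≤ j ∧ j ≤ i ∧ w i = q j := by
  intro i
  induction i with
  | zero => intro _; exact ⟨0, by simp, by simp, h0⟩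
  | succ i ih =>
    intro hi
    obtain ⟨j, h1, h2, h3⟩ := ih (by omega)
    have ha := hw i (by omega)
    rw [h3] at ha
    rcases hn j (by omega) (by omega) _ ha with h | h
    · exact ⟨j + 1, by omega, by omega, h⟩
    · exact ⟨j - 1, by omega, by omega, h⟩

/-- There is a path with `k` vertices starting from `v`. -/
def HasPath {W : Type} (G : SimpleGraph W) (v : W) (k : ℕ) : Prop :=
  ∃ p : ℕ → W, p 0 = v ∧ (∀ i j, i < k → j < k → p i = p j → i = j) ∧
    ∀ i, i + 1 < k → G.Adj (p i) (p (i + 1))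

theorem HasPath.mono {W : Type} {G : SimpleGraph W} {v : W} {k l : ℕ} (h : HasPath G v l)
    (hkl : k ≤ l) : HasPath G v k := by
  obtain ⟨p, h0, h1, h2⟩ := h
  exact ⟨p, h0, fun i j hi hj => h1 i j (by omega) (by omega), fun i hi => h2 i (by omega)⟩

/-- `l` is a leaf at the end of a long thin tail. -/
def TailEnd {W : Type} (G : SimpleGraph W) (n : ℤ) (l : W) : Prop :=
  ∃ p : ℤ → W, p 0 = l ∧ (∀ i j, 0 ≤ i → i ≤ n → 0 ≤ j → j ≤ n → p i = p j → i = j) ∧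
    (∀ i, 0 ≤ i → i < n → G.Adj (p i) (p (i + 1))) ∧
    (∀ w, G.Adj (p 0) w → w = p 1) ∧
    (∀ i, 0 < i → i < n → ∀ w, G.Adj (p i) w → w = p (i + 1) ∨ w = p (i - 1))

/-- Two copies of `G`, joined at the vertices satisfying `E`. -/
def dbl {W : Type} (G : SimpleGraph W) (E : W → Prop) : SimpleGraph (W × Bool) where
  Adj x y := (x.2 = y.2 ∧ G.Adj x.1 y.1) ∨ (x.2 ≠ y.2 ∧ x.1 = y.1 ∧ E x.1)
  symm := ⟨by
    rintro x y (⟨h, h'⟩ | ⟨h, h', h''⟩)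
    · exact Or.inl ⟨h.symm, h'.symm⟩
    · exact Or.inr ⟨h.symm, h'.symm, h' ▸ h''⟩⟩
  loopless := ⟨by
    rintro x (⟨h, h'⟩ | ⟨h, h', h''⟩)
    · exact h'.ne rfl
    · exact h rfl⟩

/-- The first copy inside the double. -/
def dblEmb {W : Type} (G : SimpleGraph W) (E : W → Prop) : G ↪g dbl G E where
  toFun x := (x, false)
  inj' x y h := congrArg Prod.fst h
  map_rel_iff' := by
    intro a b
    exact ⟨fun h => h.elim (fun h => h.2) (fun h => absurd rfl h.1), fun h => Or.inl ⟨rfl, h⟩⟩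

theorem dbl_nf {V W : Type} {N : SimpleGraph V} {n : ℤ} (hN : GoodN N n) {Y : SimpleGraph W}
    (hY : ¬ Contains N Y) (q : ℤ → W) (hq : ZPath Y q n) :
    ¬ Contains N (dbl Y (TailEnd Y n)) := by
  classical
  rintro ⟨φ, hφ⟩
  have := hN.fin
  have : Fintype V := Fintype.ofFinite V
  have hn := hN.pos
  have hcard := hN.card
  rw [Nat.card_eq_fintype_card] at hcard
  by_cases hx : ∃ x, TailEnd Y n (φ x).1
  · obtain ⟨x, hx⟩ := hx
    have hx' := hx
    obtain ⟨p, hp0, hpi, hpa, hpn0, hpn⟩ := hx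
    let c : ℤ → W × Bool := fun j => if 0 ≤ j then (p j, (φ x).2) else (p (-1 - j), !(φ x).2)
    have hE : ∀ i, 0 ≤ i → i < n → TailEnd Y n (p i) → i = 0 := by
      rintro i hi0 hin ⟨r, hr0, -, -, hr1, -⟩
      by_contra hne
      have e1 := hpa i hi0 hin
      have e2 := hpa (i - 1) (by omega) (by omega)
      rw [sub_add_cancel] at e2
      rw [← hr0] at e1 e2
      have h3 := hr1 _ e1
      have h4 := hr1 _ e2.symm
      have := hpi _ _ (by omega) (by omega) (by omega) (by omega) (h3.trans h4.symm)
      omega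
    have hcinj : ∀ i j, -n ≤ i → i ≤ n → -n ≤ j → j ≤ n → c i = c j → i = j := by
      intro i j hi1 hi2 hj1 hj2 hij
      simp only [c] at hij
      split_ifs at hij with ha hb hb
      · exact hpi _ _ ha hi2 hb hj2 (congrArg Prod.fst hij)
      · have := congrArg Prod.snd hij
        simp at this
      · have := congrArg Prod.snd hij
        simp at this
      · have := hpi _ _ (by omega) (by omega) (by omega) (by omega) (congrArg Prod.fst hij)
        omega
    have hcn : ∀ j : ℤ, -n < j → j < n → ∀ w, (dbl Y (TailEnd Y n)).Adj (c j) w →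
        w = c (j + 1) ∨ w = c (j - 1) := by
      rintro j hj1 hj2 ⟨w, s⟩ hw
      by_cases hj : 0 ≤ j
      · have e : c j = (p j, (φ x).2) := if_pos hj
        have e1 : c (j + 1) = (p (j + 1), (φ x).2) := if_pos (by omega)
        rw [e] at hw
        rcases hw with ⟨h, h'⟩ | ⟨h, h', h''⟩
        · simp only at h h'
          rcases hj.eq_or_lt with rfl | hj0
          · left
            rw [e1, hpn0 w h', h]
            simp
          · rcases hpn j hj0 hj2 w h' with h3 | h3
            · left; rw [e1, h3, h]
            · right
              have e2 : c (j - 1) = (p (j - 1), (φ x).2) := if_pos (by omega)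
              rw [e2, h3, h]
        · simp only at h h' h''
          have := hE j hj hj2 h''
          subst this
          right
          have e2 : c (0 - 1) = (p (-1 - (0 - 1)), !(φ x).2) := if_neg (by omega)
          rw [e2]
          simp only [sub_self, zero_sub]
          ext
          · exact h'.symm
          · simp only
            revert h
            cases s <;> cases (φ x).2 <;> simp
      · have e : c j = (p (-1 - j), !(φ x).2) := if_neg hj
        have e1 : c (j - 1) = (p (-1 - (j - 1)), !(φ x).2) := if_neg (by omega)
        rw [e] at hw
        rcases hw with ⟨h, h'⟩ | ⟨h, h', h''⟩
        · simp only at h h'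
          rcases eq_or_ne j (-1) with rfl | hj0
          · right
            simp only [sub_self] at h'
            rw [e1, hpn0 w h', h]
            simp
          · rcases hpn _ (by omega) (by omega) w h' with h3 | h3
            · right; rw [e1, h3, h]; congr 2; ring
            · left
              have e2 : c (j + 1) = (p (-1 - (j + 1)), !(φ x).2) := if_neg (by omega)
              rw [e2, h3, h]; congr 2; ring
        · simp only at h h' h''
          have := hE _ (by omega) (by omega) h''
          obtain rfl : j = -1 := by omega
          left
          have e2 : c (-1 + 1) = (p (-1 + 1), (φ x).2) := if_pos (by omega)
          rw [e2]
          simp only [sub_self, neg_add_cancel] at h' ⊢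
          ext
          · exact h'.symm
          · simp only
            revert h
            cases s <;> cases (φ x).2 <;> simp
    have hJ : ∀ y, ∃ j : ℤ, -n < j ∧ j < n ∧ φ y = c j := by
      intro y
      obtain ⟨w, hw⟩ := (hN.pre x y).exists_isPath
      have hl := hw.length_lt
      obtain ⟨j, h1, h2, h3⟩ := ball_lemma c w.length
        (fun j h1 h2 => hcn j (by omega) (by omega)) (fun i => φ (w.getVert i))
        (by
          have e : c 0 = (p 0, (φ x).2) := if_pos le_rfl
          rw [e, hp0]; simp)
        (fun i hi => φ.map_adj (w.adj_getVert_succ hi)) w.length le_rfl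
      refine ⟨j, by omega, by omega, ?_⟩
      simpa using h3
    choose J hJ1 hJ2 hJ3 using hJ
    refine hY ⟨⟨fun y => q (J y), ?_⟩, ?_⟩
    · intro y z hyz
      have ha := φ.map_adj hyz
      have b1 := hJ1 y
      have b2 := hJ2 y
      have b3 := hJ1 z
      have b4 := hJ2 z
      rw [hJ3 y, hJ3 z] at ha
      rcases hcn _ (hJ1 y) (hJ2 y) _ ha with h | h
      · have := hcinj _ _ (by omega) (by omega) (by omega) (by omega) h
        rw [this]
        exact hq.2 _ (by omega) (by omega)
      · have := hcinj _ _ (by omega) (by omega) (by omega) (by omega) h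
        have h5 := hq.2 (J y - 1) (by omega) (by omega)
        rw [this]
        rw [sub_add_cancel] at h5
        exact h5.symm
    · intro y z hyz
      have b1 := hJ1 y
      have b2 := hJ2 y
      have b3 := hJ1 z
      have b4 := hJ2 z
      have := hq.1 _ _ (by omega) (by omega) (by omega) (by omega) hyz
      apply hφ
      rw [hJ3 y, hJ3 z, this]
  · push Not at hx
    have hadj : ∀ x y, N.Adj x y → (φ x).2 = (φ y).2 ∧ Y.Adj (φ x).1 (φ y).1 := by
      intro x y hxy
      rcases φ.map_adj hxy with h | h
      · exact h
      · exact absurd h.2.2 (hx x)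
    have hs : ∀ x y, (φ x).2 = (φ y).2 := by
      intro x y
      obtain ⟨w⟩ := hN.pre x y
      induction w with
      | nil => rfl
      | cons h _ ih => exact (hadj _ _ h).1.trans ih
    refine hY ⟨⟨fun x => (φ x).1, fun {x y} h => (hadj x y h).2⟩, ?_⟩
    intro x y hxy
    exact hφ (Prod.ext hxy (hs x y))

/-- At most two neighbours. -/
def Deg2 {W : Type} (G : SimpleGraph W) (v : W) : Prop :=
  ∀ x y z, G.Adj v x → G.Adj v y → G.Adj v z → x = y ∨ y = z ∨ x = z

theorem Deg2.of_emb {W W' : Type} {G : SimpleGraph W} {G' : SimpleGraph W'} (f : G ↪g G') (v : W)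
    (h : Deg2 G' (f v)) : Deg2 G v := by
  intro x y z hx hy hz
  rcases h _ _ _ (f.map_adj_iff.2 hx) (f.map_adj_iff.2 hy) (f.map_adj_iff.2 hz) with h | h | h
  · exact Or.inl (f.injective h)
  · exact Or.inr (Or.inl (f.injective h))
  · exact Or.inr (Or.inr (f.injective h))

theorem Deg2.of_nbr {W : Type} {G : SimpleGraph W} {v a b : W}
    (h : ∀ w, G.Adj v w → w = a ∨ w = b) : Deg2 G v := by
  intro x y z hx hy hz
  rcases h x hx with rfl | rfl <;> rcases h y hy with rfl | rfl <;> rcases h z hz with rfl | rfl <;>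
    simp

/-- Subgraph spanned by vertices with at most two neighbours. -/
def thin {W : Type} (G : SimpleGraph W) : SimpleGraph W where
  Adj x y := G.Adj x y ∧ Deg2 G x ∧ Deg2 G y
  symm := ⟨fun _ _ h => ⟨h.1.symm, h.2.2, h.2.1⟩⟩
  loopless := ⟨fun _ h => h.1.ne rfl⟩

theorem leaf_tail {V W : Type} {N : SimpleGraph V} {n : ℤ} (hN : GoodN N n) {Y : SimpleGraph W}
    (hY : ¬ Contains N Y) (q : ℤ → W) (hq : ZPath Y q (3 * n)) (u : W)
    (hr : (thin Y).Reachable (q 0) u) (hu : ∀ x y, Y.Adj u x → Y.Adj u y → x = y) :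
    TailEnd Y n u := by
  have hn := hN.pos
  obtain ⟨w, hw⟩ := hr.exists_isPath
  rcases le_or_gt n w.length with hd | hd
  · have hadj : ∀ i : ℤ, 0 ≤ i → i < n → (thin Y).Adj (w.getVert (w.length - i).toNat)
        (w.getVert (w.length - (i + 1)).toNat) := by
      intro i hi0 hin
      have := w.adj_getVert_succ (i := (w.length - (i + 1)).toNat) (by omega)
      have e : (w.length - (i + 1)).toNat + 1 = (w.length - i).toNat := by omega
      rw [e] at this
      exact this.symm
    have h0 : w.getVert ((w.length : ℤ) - 0).toNat = u := by simp
    have hinj : ∀ i j : ℤ, 0 ≤ i → i ≤ n → 0 ≤ j → j ≤ n →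
        w.getVert (w.length - i).toNat = w.getVert (w.length - j).toNat → i = j := by
      intro i j hi1 hi2 hj1 hj2 hij
      have := hw.getVert_injOn (by rw [Set.mem_ofPred_eq]; omega)
        (by rw [Set.mem_ofPred_eq]; omega) hij
      omega
    refine ⟨fun i => w.getVert (w.length - i).toNat, h0, hinj, ?_, ?_, ?_⟩
    · intro i h1 h2
      exact (hadj i h1 h2).1
    · intro x hx
      simp only [h0] at hx
      refine hu _ _ hx ?_
      have := (hadj 0 le_rfl (by omega)).1
      rw [h0, zero_add] at this
      exact this
    · intro i h1 h2 x hx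
      have a1 := hadj i (by omega) h2
      have a2 := hadj (i - 1) (by omega) (by omega)
      rw [sub_add_cancel] at a2
      rcases a1.2.1 _ _ _ hx a1.1 a2.1.symm with h | h | h
      · exact Or.inl h
      · have := hinj _ _ (by omega) (by omega) (by omega) (by omega) h
        omega
      · exact Or.inr h
  · exfalso
    obtain ⟨j, h1, h2, h3⟩ := ball_lemma q w.length
      (fun j h1 h2 => hq.nbr hN hY j (by omega) (by omega)) (fun i => w.getVert i)
      (by simp) (fun i hi => (w.adj_getVert_succ hi).1) w.length le_rfl
    simp only [Walk.getVert_length] at h3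
    have a1 := hq.2 j (by omega) (by omega)
    have a2 := hq.2 (j - 1) (by omega) (by omega)
    rw [sub_add_cancel] at a2
    rw [← h3] at a1 a2
    have := hq.1 _ _ (by omega) (by omega) (by omega) (by omega) (hu _ _ a1 a2.symm)
    omega

theorem dbl_bound {V W B : Type} [Fintype W] {N : SimpleGraph V} {n : ℤ} (hN : GoodN N n)
    {Y : SimpleGraph W}
    (hY : ¬ Contains N Y) (q : ℤ → W) (hq : ZPath Y q (3 * n)) {H : SimpleGraph B}
    (hH : ¬ Contains N H) (f : dbl Y (TailEnd Y n) ↪g H) :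
    ¬ HasPath H (f (q 0, false)) (2 * Fintype.card W + n.toNat + 1) := by
  classical
  have hn := hN.pos
  rintro ⟨t, ht0, hti, hta⟩
  have hq' : ZPath H (fun j => f (q j, false)) (3 * n) := by
    constructor
    · intro i j h1 h2 h3 h4 h
      exact hq.1 i j h1 h2 h3 h4 (congrArg Prod.fst (f.injective h))
    · intro j h1 h2
      exact f.map_adj_iff.2 (Or.inl ⟨rfl, hq.2 j h1 h2⟩)
  have hdeg : ∀ i, i ≤ 2 * Fintype.card W → Deg2 H (t i) := by
    intro i hi
    rcases lt_or_ge i n.toNat with hin | hin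
    · obtain ⟨j, h1, h2, h3⟩ := ball_lemma (fun j => f (q j, false)) i
        (fun j h1 h2 => hq'.nbr hN hH j (by omega) (by omega)) t ht0
        (fun k hk => hta k (by omega)) i le_rfl
      rw [h3]
      exact Deg2.of_nbr (hq'.nbr hN hH j (by omega) (by omega))
    · have hz : ZPath H (fun j => t (i + j).toNat) n := by
        constructor
        · intro a b h1 h2 h3 h4 h
          have := hti _ _ (by omega) (by omega) h
          omega
        · intro j h1 h2
          have := hta (i + j).toNat (by omega)
          have e : (i + (j + 1)).toNat = (i + j).toNat + 1 := by omega
          simp only [e]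
          exact this
      have := hz.nbr hN hH 0 (by omega) (by omega)
      simp only [add_zero, Int.toNat_natCast] at this
      exact Deg2.of_nbr this
  have key : ∀ i, i ≤ 2 * Fintype.card W →
      ∃ u s, t i = f (u, s) ∧ (thin Y).Reachable (q 0) u := by
    intro i
    induction i with
    | zero => intro _; exact ⟨_, _, ht0, Reachable.refl _⟩
    | succ i ih =>
      intro hi
      obtain ⟨u, s, h1, h2⟩ := ih (by omega)
      have hd := hdeg i (by omega)
      have ha := hta i (by omega)
      rw [h1] at hd ha
      have hdD : Deg2 _ (u, s) := Deg2.of_emb f (u, s) hd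
      have hdY : Deg2 Y u := by
        intro x y z hx hy hz
        rcases hdD (x, s) (y, s) (z, s) (Or.inl ⟨rfl, hx⟩) (Or.inl ⟨rfl, hy⟩) (Or.inl ⟨rfl, hz⟩)
          with h | h | h
        · exact Or.inl (congrArg Prod.fst h)
        · exact Or.inr (Or.inl (congrArg Prod.fst h))
        · exact Or.inr (Or.inr (congrArg Prod.fst h))
      have htwo : ∃ a b, (dbl Y (TailEnd Y n)).Adj (u, s) a ∧ (dbl Y (TailEnd Y n)).Adj (u, s) b ∧
          a ≠ b := by
        by_cases hu : ∀ x y, Y.Adj u x → Y.Adj u y → x = y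
        · have hT := leaf_tail hN hY q hq u h2 hu
          have hT' := hT
          obtain ⟨p, hp0, -, hp1, -⟩ := hT
          refine ⟨(p 1, s), (u, !s), Or.inl ⟨rfl, ?_⟩, Or.inr ⟨?_, rfl, hT'⟩, ?_⟩
          · have := hp1 0 le_rfl (by omega)
            rwa [hp0] at this
          · cases s <;> simp
          · intro h
            have := congrArg Prod.snd h
            simp at this
        · push Not at hu
          obtain ⟨x, y, hx, hy, hxy⟩ := hu
          exact ⟨(x, s), (y, s), Or.inl ⟨rfl, hx⟩, Or.inl ⟨rfl, hy⟩,
            fun h => hxy (congrArg Prod.fst h)⟩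
      obtain ⟨a, b, hua, hub, hab⟩ := htwo
      have hex : ∃ c, t (i + 1) = f c ∧ (dbl Y (TailEnd Y n)).Adj (u, s) c := by
        rcases hd _ _ _ ha (f.map_adj_iff.2 hua) (f.map_adj_iff.2 hub) with h | h | h
        · exact ⟨a, h, hua⟩
        · exact absurd (f.injective h) hab
        · exact ⟨b, h, hub⟩
      obtain ⟨⟨v, s'⟩, hc1, hc2⟩ := hex
      refine ⟨v, s', hc1, ?_⟩
      rcases hc2 with ⟨-, h⟩ | ⟨-, h, -⟩
      · refine h2.trans (Adj.reachable ⟨h, hdY, ?_⟩)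
        have hd' := hdeg (i + 1) hi
        rw [hc1] at hd'
        have hdD' : Deg2 _ (v, s') := Deg2.of_emb f (v, s') hd'
        intro x y z hx hy hz
        rcases hdD' (x, s') (y, s') (z, s') (Or.inl ⟨rfl, hx⟩) (Or.inl ⟨rfl, hy⟩)
          (Or.inl ⟨rfl, hz⟩) with h | h | h
        · exact Or.inl (congrArg Prod.fst h)
        · exact Or.inr (Or.inl (congrArg Prod.fst h))
        · exact Or.inr (Or.inr (congrArg Prod.fst h))
      · simp only at h
        rw [← h]
        exact h2
  have key' : ∀ i : Fin (2 * Fintype.card W + 1), ∃ c, t i = f c := by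
    intro i
    obtain ⟨u, s, h, -⟩ := key i (by omega)
    exact ⟨_, h⟩
  choose c hc using key'
  have hcinj : Function.Injective c := by
    intro i j hij
    have : t i = t j := by rw [hc, hc, hij]
    have := hti _ _ (by omega) (by omega) this
    exact Fin.ext this
  have := Fintype.card_le_of_injective c hcinj
  simp at this
  omega

/-- Finite graphs with labelled vertices. -/
structure LG (Λ : Type) : Type 1 where
  V : Type
  fin : Finite V
  G : SimpleGraph V
  lab : V → Λ

/-- Label preserving induced embeddings. -/
def LG.le {Λ : Type} (X Y : LG Λ) : Prop :=
  ∃ f : X.G ↪g Y.G, ∀ x, Y.lab (f x) = X.lab x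

instance {Λ : Type} : IsPreorder (LG Λ) LG.le where
  refl X := ⟨Embedding.refl, fun _ => rfl⟩
  trans X Y Z := by
    rintro ⟨f, hf⟩ ⟨g, hg⟩
    exact ⟨g.comp f, fun x => (hg _).trans (hf x)⟩

/-- Every component has a vertex from which no long paths start. -/
def LG.Cl {Λ : Type} (k : ℕ) (X : LG Λ) : Prop :=
  ∀ x, ∃ r, X.G.Reachable x r ∧ ¬ HasPath X.G r (k + 1)

open Classical in
/-- A component with its root removed; the labels remember adjacency to the root. -/
noncomputable def LG.piece {Λ : Type} (X : LG Λ) (c : X.G.ConnectedComponent) (r : X.V) :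
    LG (Λ × Bool) where
  V := {x : X.V // X.G.connectedComponentMk x = c ∧ x ≠ r}
  fin := by
    have := X.fin
    infer_instance
  G := X.G.comap Subtype.val
  lab x := (X.lab x.1, decide (X.G.Adj x.1 r))

theorem LG.piece_cl {Λ : Type} {k : ℕ} (X : LG Λ) (c : X.G.ConnectedComponent) (r : X.V)
    (hr : X.G.connectedComponentMk r = c) (hp : ¬ HasPath X.G r (k + 2)) :
    (X.piece c r).Cl k := by
  rintro ⟨x, hx, hxr⟩
  have hreach : X.G.Reachable r x := ConnectedComponent.exact (hr.trans hx.symm)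
  obtain ⟨w, hw⟩ := hreach.exists_isPath
  have hlen : 0 < w.length := by
    rcases Nat.eq_zero_or_pos w.length with h | h
    · exact absurd (Walk.eq_of_length_eq_zero h).symm hxr
    · exact h
  have hmem : ∀ i, 0 < i → i ≤ w.length → X.G.connectedComponentMk (w.getVert i) = c ∧
      w.getVert i ≠ r := by
    intro i h0 hi
    refine ⟨?_, ?_⟩
    · rw [← hr]
      apply ConnectedComponent.sound
      exact ⟨(w.take i).reverse⟩
    · intro h
      have := hw.getVert_injOn (x₁ := i) (x₂ := 0) (by rw [Set.mem_ofPred_eq]; omega)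
        (by rw [Set.mem_ofPred_eq]; omega) (by simpa using h)
      omega
  have hre : ∀ i, ∀ h0 : 0 < i, ∀ hi : i ≤ w.length,
      (X.piece c r).G.Reachable ⟨w.getVert 1, hmem 1 (by omega) (by omega)⟩
        ⟨w.getVert i, hmem i h0 hi⟩ := by
    intro i
    induction i with
    | zero => intro h; omega
    | succ i ih =>
      intro h0 hi
      rcases Nat.eq_zero_or_pos i with rfl | h
      · rfl
      · refine (ih h (by omega)).trans (Adj.reachable ?_)
        exact w.adj_getVert_succ (by omega)
  refine ⟨⟨w.getVert 1, hmem 1 (by omega) (by omega)⟩, ?_, ?_⟩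
  · have := (hre w.length hlen le_rfl).symm
    simp only [Walk.getVert_length] at this
    exact this
  · rintro ⟨p, hp0, hpi, hpa⟩
    refine hp ⟨fun i => if i = 0 then r else (p (i - 1)).1, by simp, ?_, ?_⟩
    · intro i j hi hj hij
      simp only at hij
      split_ifs at hij with h1 h2 h2
      · omega
      · exact absurd hij.symm (p (j - 1)).2.2
      · exact absurd hij (p (i - 1)).2.2
      · have := hpi _ _ (by omega) (by omega) (Subtype.ext hij)
        omega
    · intro i hi
      rcases Nat.eq_zero_or_pos i with rfl | h
      · simp only [if_true, zero_add, one_ne_zero, if_false, Nat.sub_self, hp0]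
        have := w.adj_getVert_succ hlen
        simpa using this
      · simp only
        rw [if_neg (by omega), if_neg (by omega)]
        have := hpa (i - 1) (by omega)
        rw [Nat.sub_add_cancel h] at this
        exact this

theorem exists_map_of_sublist {C C' A : Type*} [Fintype C] [Fintype C'] (R : A → A → Prop)
    (P : C → A) (P' : C' → A)
    (h : List.SublistForall₂ R (Finset.univ.toList.map P) (Finset.univ.toList.map P')) :
    ∃ g : C → C', Function.Injective g ∧ ∀ c, R (P c) (P' (g c)) := by
  classical
  obtain ⟨l, h1, h2⟩ := List.sublistForall₂_iff.1 h
  obtain ⟨l', h3, rfl⟩ := List.sublist_map_iff.1 h2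
  have hnd : l'.Nodup := h3.nodup (Finset.nodup_toList _)
  have hlen : (Finset.univ.toList : List C).length = l'.length := by
    have := h1.length_eq
    simpa using this
  have hidx : ∀ c : C, List.idxOf c (Finset.univ.toList : List C) < (Finset.univ.toList : List C).length :=
    fun c => List.idxOf_lt_length_iff.2 (by simp)
  refine ⟨fun c => l'[List.idxOf c (Finset.univ.toList : List C)]'(hlen ▸ hidx c), ?_, ?_⟩
  · intro c d hcd
    have := (hnd.getElem_inj_iff).1 hcd
    exact (List.idxOf_inj (by simp)).1 this
  · intro c
    have := (List.forall₂_iff_get.1 h1).2 (List.idxOf c (Finset.univ.toList : List C))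
      (by simpa using hidx c) (by simpa using hlen ▸ hidx c)
    simpa using this

theorem LG.glue {Λ : Type} (X Y : LG Λ) (r : X.G.ConnectedComponent → X.V)
    (r' : Y.G.ConnectedComponent → Y.V)
    (hr' : ∀ c, Y.G.connectedComponentMk (r' c) = c)
    (g : X.G.ConnectedComponent → Y.G.ConnectedComponent) (hg : Function.Injective g)
    (h1 : ∀ c, X.lab (r c) = Y.lab (r' (g c)))
    (h2 : ∀ c, (X.piece c (r c)).le (Y.piece (g c) (r' (g c)))) : X.le Y := by
  classical
  choose f hf using h2
  let ψ : X.G.ConnectedComponent → X.V → Y.V := fun c x =>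
    if h : X.G.connectedComponentMk x = c ∧ x ≠ r c then (f c ⟨x, h⟩).1 else r' (g c)
  have hψr : ∀ c, ψ c (r c) = r' (g c) := fun c => dif_neg (by simp)
  have hψ : ∀ c x (h : X.G.connectedComponentMk x = c ∧ x ≠ r c), ψ c x = (f c ⟨x, h⟩).1 :=
    fun c x h => dif_pos h
  have hcomp : ∀ c x, X.G.connectedComponentMk x = c →
      Y.G.connectedComponentMk (ψ c x) = g c := by
    intro c x hx
    by_cases h : x = r c
    · rw [h, hψr, hr']
    · rw [hψ c x ⟨hx, h⟩]
      exact (f c ⟨x, hx, h⟩).2.1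
  have hinj : ∀ c x y, X.G.connectedComponentMk x = c → X.G.connectedComponentMk y = c →
      ψ c x = ψ c y → x = y := by
    intro c x y hx hy hxy
    by_cases h : x = r c <;> by_cases h' : y = r c
    · rw [h, h']
    · rw [h, hψr, hψ c y ⟨hy, h'⟩] at hxy
      exact absurd hxy.symm (f c ⟨y, hy, h'⟩).2.2
    · rw [h', hψr, hψ c x ⟨hx, h⟩] at hxy
      exact absurd hxy (f c ⟨x, hx, h⟩).2.2
    · rw [hψ c x ⟨hx, h⟩, hψ c y ⟨hy, h'⟩] at hxy
      have := (f c).injective (Subtype.ext hxy)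
      exact congrArg Subtype.val this
  have hrt : ∀ c x (hx : X.G.connectedComponentMk x = c), x ≠ r c →
      (Y.G.Adj (ψ c x) (r' (g c)) ↔ X.G.Adj x (r c)) := by
    intro c x hx h
    have := hf c ⟨x, hx, h⟩
    have h3 := congrArg Prod.snd this
    simp only [LG.piece, decide_eq_decide] at h3
    rw [hψ c x ⟨hx, h⟩]
    exact h3
  have hadj : ∀ c x y, X.G.connectedComponentMk x = c → X.G.connectedComponentMk y = c →
      (Y.G.Adj (ψ c x) (ψ c y) ↔ X.G.Adj x y) := by
    intro c x y hx hy
    by_cases h : x = r c <;> by_cases h' : y = r c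
    · rw [h, h']
      simp
    · rw [h, hψr, Y.G.adj_comm, X.G.adj_comm]
      exact hrt c y hy h'
    · rw [h', hψr]
      exact hrt c x hx h
    · rw [hψ c x ⟨hx, h⟩, hψ c y ⟨hy, h'⟩]
      exact (f c).map_adj_iff
  have hlab : ∀ c x, X.G.connectedComponentMk x = c → Y.lab (ψ c x) = X.lab x := by
    intro c x hx
    by_cases h : x = r c
    · rw [h, hψr, h1]
    · rw [hψ c x ⟨hx, h⟩]
      exact congrArg Prod.fst (hf c ⟨x, hx, h⟩)
  refine ⟨⟨⟨fun x => ψ (X.G.connectedComponentMk x) x, ?_⟩, ?_⟩, ?_⟩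
  · intro x y hxy
    simp only at hxy
    have e : X.G.connectedComponentMk x = X.G.connectedComponentMk y := by
      apply hg
      rw [← hcomp _ x rfl, ← hcomp _ y rfl, hxy]
    rw [← e] at hxy
    exact hinj _ x y rfl e.symm hxy
  · intro x y
    change Y.G.Adj (ψ _ x) (ψ _ y) ↔ _
    by_cases e : X.G.connectedComponentMk x = X.G.connectedComponentMk y
    · rw [← e]
      exact hadj _ x y rfl e.symm
    · constructor
      · intro h
        exfalso
        apply e
        apply hg
        rw [← hcomp _ x rfl, ← hcomp _ y rfl]
        exact ConnectedComponent.sound h.reachable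
      · intro h
        exact absurd (ConnectedComponent.sound h.reachable) e
  · intro x
    exact hlab _ x rfl

theorem LG.wqo (k : ℕ) : ∀ (Λ : Type) [Finite Λ],
    {X : LG Λ | X.Cl k}.PartiallyWellOrderedOn LG.le := by
  induction k with
  | zero =>
    intro Λ _
    rw [Set.partiallyWellOrderedOn_iff_exists_lt]
    intro X hX
    refine ⟨0, 1, by omega, ?_⟩
    have : IsEmpty (X 0).V := by
      refine ⟨fun x => ?_⟩
      obtain ⟨r, -, hr⟩ := hX 0 x
      exact hr ⟨fun _ => r, rfl, fun i j hi hj _ => by omega, fun i hi => by omega⟩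
    exact ⟨⟨⟨fun x => isEmptyElim x, fun x => isEmptyElim x⟩, fun {x} => isEmptyElim x⟩,
      fun x => isEmptyElim x⟩
  | succ k ih =>
    intro Λ _
    have h1 : (Set.univ : Set Λ).PartiallyWellOrderedOn Eq := Set.finite_univ.partiallyWellOrderedOn
    have h2 := h1.prod (ih (Λ × Bool))
    let R : Λ × LG (Λ × Bool) → Λ × LG (Λ × Bool) → Prop := fun x y => x.1 = y.1 ∧ x.2.le y.2
    have : IsPreorder (Λ × LG (Λ × Bool)) R :=
      { refl := fun x => ⟨rfl, refl_of LG.le x.2⟩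
        trans := fun x y z h h' => ⟨h.1.trans h'.1, trans_of LG.le h.2 h'.2⟩ }
    have h3 := Set.PartiallyWellOrderedOn.partiallyWellOrderedOn_sublistForall₂ R h2
    rw [Set.partiallyWellOrderedOn_iff_exists_lt] at h3 ⊢
    intro X hX
    have hroot : ∀ i, ∀ c : (X i).G.ConnectedComponent, ∃ r, (X i).G.connectedComponentMk r = c ∧
        ¬ HasPath (X i).G r (k + 2) := by
      intro i c
      obtain ⟨x, rfl⟩ := c.exists_rep
      obtain ⟨r, hr, hr'⟩ := hX i x
      exact ⟨r, ConnectedComponent.sound hr.symm, hr'⟩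
    choose r hr hrp using hroot
    have hfin : ∀ i, Finite (X i).G.ConnectedComponent := by
      intro i
      have := (X i).fin
      exact Quot.finite _
    let ft : ∀ i, Fintype (X i).G.ConnectedComponent := fun i => Fintype.ofFinite _
    let P : ∀ i, (X i).G.ConnectedComponent → Λ × LG (Λ × Bool) := fun i c =>
      ((X i).lab (r i c), (X i).piece c (r i c))
    obtain ⟨m, n, hmn, hs⟩ := h3 (fun i => Finset.univ.toList.map (P i)) (by
      intro i y hy
      obtain ⟨c, -, rfl⟩ := List.mem_map.1 hy
      exact ⟨trivial, LG.piece_cl _ _ _ (hr i c) (hrp i c)⟩)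
    refine ⟨m, n, hmn, ?_⟩
    obtain ⟨g, hg, hgR⟩ := exists_map_of_sublist R _ _ hs
    exact LG.glue _ _ (r m) (r n) (hr n) g hg (fun c => (hgR c).1) (fun c => (hgR c).2)

/-- Finite `N`-free extensions of `A`. -/
structure NExt {V α : Type} (N : SimpleGraph V) (A : SimpleGraph α) : Type 1 where
  W : Type
  ft : Fintype W
  G : SimpleGraph W
  nf : ¬ Contains N G
  e : A ↪g G

/-- Embeddability over `A`. -/
def NExt.le {V α : Type} {N : SimpleGraph V} {A : SimpleGraph α} (E F : NExt N A) : Prop :=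
  ∃ h : E.G ↪g F.G, ∀ a, h (E.e a) = F.e a

theorem NExt.le_refl {V α : Type} {N : SimpleGraph V} {A : SimpleGraph α} (E : NExt N A) : E.le E :=
  ⟨Embedding.refl, fun _ => rfl⟩

theorem NExt.le.trans {V α : Type} {N : SimpleGraph V} {A : SimpleGraph α} {E F H : NExt N A}
    (h : E.le F) (h' : F.le H) : E.le H := by
  obtain ⟨f, hf⟩ := h
  obtain ⟨g, hg⟩ := h'
  refine ⟨g.comp f, fun a => ?_⟩
  change g (f _) = _
  rw [hf, hg]

/-- Components of `a` in all extensions of `E` are bounded. -/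
def NExt.Bdd {V α : Type} {N : SimpleGraph V} {A : SimpleGraph α} (E : NExt N A) (a : α) (K : ℕ) :
    Prop :=
  ∀ F : NExt N A, E.le F → ∃ r, F.G.Reachable (F.e a) r ∧ ¬ HasPath F.G r K

theorem NExt.Bdd.mono {V α : Type} {N : SimpleGraph V} {A : SimpleGraph α} {E E' : NExt N A} {a : α}
    {K K' : ℕ} (h : E.Bdd a K) (hE : E.le E') (hK : K ≤ K') : E'.Bdd a K' := by
  intro F hF
  obtain ⟨r, h1, h2⟩ := h F (hE.trans hF)
  exact ⟨r, h1, fun h3 => h2 (h3.mono hK)⟩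

theorem exists_bdd_one {V α : Type} {N : SimpleGraph V} {n : ℤ} (hN : GoodN N n)
    {A : SimpleGraph α} (E : NExt N A) (a : α) :
    ∃ E' : NExt N A, E.le E' ∧ ∃ K, E'.Bdd a K := by
  have hn := hN.pos
  by_cases hb : E.Bdd a (6 * n + 1).toNat
  · exact ⟨E, E.le_refl, _, hb⟩
  · simp only [NExt.Bdd] at hb
    push Not at hb
    obtain ⟨F, hEF, hF⟩ := hb
    obtain ⟨p, hp0, hpi, hpa⟩ := hF (F.e a) (Reachable.refl _)
    have hq : ZPath F.G (fun j => p (j + 3 * n).toNat) (3 * n) := by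
      constructor
      · intro i j h1 h2 h3 h4 h
        have := hpi _ _ (by omega) (by omega) h
        omega
      · intro j h1 h2
        have := hpa (j + 3 * n).toNat (by omega)
        have e : (j + 1 + 3 * n).toNat = (j + 3 * n).toNat + 1 := by omega
        simp only [e]
        exact this
    have hq1 : ZPath F.G (fun j => p (j + 3 * n).toNat) n :=
      ⟨fun i j h1 h2 h3 h4 => hq.1 i j (by omega) (by omega) (by omega) (by omega),
        fun j h1 h2 => hq.2 j (by omega) (by omega)⟩
    have hreach : ∀ i, i < (6 * n + 1).toNat → F.G.Reachable (F.e a) (p i) := by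
      intro i
      induction i with
      | zero => intro _; rw [hp0]
      | succ i ih =>
        intro hi
        exact (ih (by omega)).trans (hpa i (by omega)).reachable
    have := F.ft
    refine ⟨⟨F.W × Bool, inferInstance, dbl F.G (TailEnd F.G n), dbl_nf hN F.nf _ hq1,
      (dblEmb _ _).comp F.e⟩, hEF.trans ⟨dblEmb _ _, fun _ => rfl⟩,
      2 * Fintype.card F.W + n.toNat + 1, ?_⟩
    rintro H ⟨f, hf⟩
    refine ⟨f (p (0 + 3 * n).toNat, false), ?_, dbl_bound hN F.nf _ hq H.nf f⟩
    rw [← hf a]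
    exact ((hreach (0 + 3 * n).toNat (by omega)).map (dblEmb F.G (TailEnd F.G n)).toHom).map
      f.toHom

theorem exists_bdd {V α : Type} [Fintype α] {N : SimpleGraph V} {n : ℤ} (hN : GoodN N n)
    {A : SimpleGraph α} (E : NExt N A) : ∃ E' : NExt N A, E.le E' ∧ ∃ K, ∀ a, E'.Bdd a K := by
  classical
  have key : ∀ s : Finset α, ∃ E' : NExt N A, E.le E' ∧ ∃ K, ∀ a ∈ s, E'.Bdd a K := by
    intro s
    induction s using Finset.induction_on with
    | empty => exact ⟨E, E.le_refl, 0, by simp⟩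
    | insert a s _ ih =>
      obtain ⟨E', h1, K, hK⟩ := ih
      obtain ⟨E'', h2, K', hK'⟩ := exists_bdd_one hN E' a
      refine ⟨E'', h1.trans h2, max K K', ?_⟩
      intro b hb
      rcases Finset.mem_insert.1 hb with rfl | hb
      · exact hK'.mono E''.le_refl (le_max_right _ _)
      · exact (hK b hb).mono h2 (le_max_left _ _)
  obtain ⟨E', h, K, hK⟩ := key Finset.univ
  exact ⟨E', h, K, fun a => hK a (Finset.mem_univ a)⟩

open Classical in
/-- The union of the components meeting `A`, with labels for the elements of `A`. -/
noncomputable def NExt.core {V α : Type} {N : SimpleGraph V} {A : SimpleGraph α} (E : NExt N A) :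
    LG (Option α) where
  V := {x : E.W // ∃ a, E.G.Reachable (E.e a) x}
  fin := by
    have := E.ft
    infer_instance
  G := E.G.comap Subtype.val
  lab x := if h : ∃ a, E.e a = x.1 then some h.choose else none

theorem NExt.core_lab {V α : Type} {N : SimpleGraph V} {A : SimpleGraph α} (E : NExt N A)
    (x : E.core.V) (a : α) : E.core.lab x = some a ↔ E.e a = x.1 := by
  simp only [NExt.core]
  constructor
  · intro h
    split_ifs at h with h1
    have := h1.choose_spec
    rw [Option.some_inj.1 h] at this
    exact this
  · intro h
    have h1 : ∃ a, E.e a = x.1 := ⟨a, h⟩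
    rw [dif_pos h1]
    congr 1
    exact E.e.injective (h1.choose_spec.trans h.symm)

theorem NExt.core_cl {V α : Type} {N : SimpleGraph V} {A : SimpleGraph α} (E : NExt N A) (K : ℕ)
    (h : ∀ a, ∃ r, E.G.Reachable (E.e a) r ∧ ¬ HasPath E.G r K) : E.core.Cl K := by
  have key : ∀ x y : E.W, E.G.Reachable x y → ∀ hx : (∃ a, E.G.Reachable (E.e a) x),
      ∀ hy : (∃ a, E.G.Reachable (E.e a) y), E.core.G.Reachable ⟨x, hx⟩ ⟨y, hy⟩ := by
    rintro x y ⟨w⟩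
    induction w with
    | nil => intro _ _; exact Reachable.refl _
    | cons hadj w ih =>
      intro hx hy
      obtain ⟨a, ha⟩ := hx
      have hz := ha.trans hadj.reachable
      exact (Adj.reachable (G := E.core.G) (u := ⟨_, a, ha⟩) (v := ⟨_, a, hz⟩) hadj).trans
        (ih ⟨a, hz⟩ hy)
  rintro ⟨x, a, hx⟩
  obtain ⟨r, hr, hp⟩ := h a
  refine ⟨⟨r, a, hr⟩, key _ _ (hx.symm.trans hr) _ _, ?_⟩
  rintro ⟨p, hp0, hpi, hpa⟩
  refine hp (HasPath.mono (l := K + 1) ⟨fun i => (p i).1, congrArg Subtype.val hp0, ?_, ?_⟩ (by omega))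
  · intro i j hi hj hij
    exact hpi i j hi hj (Subtype.ext hij)
  · intro i hi
    exact hpa i hi

theorem sum_nf {V W W' : Type} {N : SimpleGraph V} (hN : N.Preconnected) {G : SimpleGraph W}
    {H : SimpleGraph W'} (hG : ¬ Contains N G) (hH : ¬ Contains N H) : ¬ Contains N (G ⊕g H) := by
  rintro ⟨φ, hφ⟩
  by_cases hx : ∃ x w, φ x = Sum.inl w
  · obtain ⟨x, w, hx⟩ := hx
    have : ∀ y, ∃ w, φ y = Sum.inl w := by
      intro y
      have hr := (hN x y).map φ
      rw [hx] at hr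
      rcases h : φ y with w' | w'
      · exact ⟨w', rfl⟩
      · rw [h] at hr
        exact absurd hr (not_reachable_sum_inl_inr _ _)
    choose f hf using this
    refine hG ⟨⟨f, ?_⟩, ?_⟩
    · intro y z hyz
      have := φ.map_adj hyz
      rw [hf, hf] at this
      exact sum_adj_inl.1 this
    · intro y z hyz
      apply hφ
      rw [hf, hf]
      exact congrArg Sum.inl hyz
  · push Not at hx
    have : ∀ y, ∃ w, φ y = Sum.inr w := by
      intro y
      rcases h : φ y with w' | w'
      · exact absurd h (hx y w')
      · exact ⟨w', rfl⟩
    choose f hf using this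
    refine hH ⟨⟨f, ?_⟩, ?_⟩
    · intro y z hyz
      have := φ.map_adj hyz
      rw [hf, hf] at this
      exact sum_adj_inr.1 this
    · intro y z hyz
      apply hφ
      rw [hf, hf]
      exact congrArg Sum.inr hyz

theorem NExt.amalg {V α : Type} {N : SimpleGraph V} (hN : N.Preconnected)
    {A : SimpleGraph α} (E F : NExt N A) (h : E.core.le F.core) : ∃ D : NExt N A, E.le D ∧ F.le D := by
  classical
  obtain ⟨ψ, hψ⟩ := h
  have := E.ft
  have := F.ft
  refine ⟨⟨F.W ⊕ E.W, inferInstance, F.G ⊕g E.G, sum_nf hN F.nf E.nf,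
    Embedding.sumInl.comp F.e⟩, ?_, ⟨Embedding.sumInl, fun _ => rfl⟩⟩
  let g : E.W → F.W ⊕ E.W := fun x =>
    if h : ∃ a, E.G.Reachable (E.e a) x then Sum.inl (ψ ⟨x, h⟩).1 else Sum.inr x
  have g1 : ∀ x (h : ∃ a, E.G.Reachable (E.e a) x), g x = Sum.inl (ψ ⟨x, h⟩).1 :=
    fun x h => dif_pos h
  have g2 : ∀ x (h : ¬ ∃ a, E.G.Reachable (E.e a) x), g x = Sum.inr x :=
    fun x h => dif_neg h
  refine ⟨⟨⟨g, ?_⟩, ?_⟩, ?_⟩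
  · intro x y hxy
    by_cases hx : ∃ a, E.G.Reachable (E.e a) x <;> by_cases hy : ∃ a, E.G.Reachable (E.e a) y
    · rw [g1 x hx, g1 y hy] at hxy
      have := ψ.injective (Subtype.ext (Sum.inl_injective hxy))
      exact congrArg Subtype.val this
    · rw [g1 x hx, g2 y hy] at hxy
      cases hxy
    · rw [g2 x hx, g1 y hy] at hxy
      cases hxy
    · rw [g2 x hx, g2 y hy] at hxy
      exact Sum.inr_injective hxy
  · intro x y
    change (F.G ⊕g E.G).Adj (g x) (g y) ↔ E.G.Adj x y
    by_cases hx : ∃ a, E.G.Reachable (E.e a) x <;> by_cases hy : ∃ a, E.G.Reachable (E.e a) y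
    · rw [g1 x hx, g1 y hy, sum_adj_inl]
      exact ψ.map_adj_iff
    · rw [g1 x hx, g2 y hy]
      refine ⟨fun h => absurd h (by simp), fun h => absurd ?_ hy⟩
      obtain ⟨a, ha⟩ := hx
      exact ⟨a, ha.trans h.reachable⟩
    · rw [g2 x hx, g1 y hy]
      refine ⟨fun h => absurd h (by simp), fun h => absurd ?_ hx⟩
      obtain ⟨a, ha⟩ := hy
      exact ⟨a, ha.trans h.symm.reachable⟩
    · rw [g2 x hx, g2 y hy, sum_adj_inr]
  · intro a
    change g (E.e a) = Sum.inl (F.e a)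
    have hx : ∃ b, E.G.Reachable (E.e b) (E.e a) := ⟨a, Reachable.refl _⟩
    rw [g1 _ hx]
    congr 1
    have h3 := hψ ⟨_, hx⟩
    rw [(E.core_lab ⟨_, hx⟩ a).2 rfl] at h3
    exact ((F.core_lab _ a).1 h3).symm

theorem exists_amalg_base {V α : Type} [Fintype α] {N : SimpleGraph V} {n : ℤ} (hN : GoodN N n)
    {A : SimpleGraph α} (E : NExt N A) :
    ∃ E' : NExt N A, ∀ B C : NExt N A, E'.le B → E'.le C → ∃ D : NExt N A, B.le D ∧ C.le D := by
  obtain ⟨E₀, -, K, hK⟩ := exists_bdd hN E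
  by_contra hcon
  push Not at hcon
  choose b c hb hc hbc using hcon
  let s : ℕ → NExt N A := fun i => Nat.rec E₀ (fun _ X => c X) i
  have hs : ∀ i, s (i + 1) = c (s i) := fun i => rfl
  have hmono : ∀ i j, i ≤ j → (s i).le (s j) := by
    intro i j hij
    induction j, hij using Nat.le_induction with
    | base => exact NExt.le_refl _
    | succ j _ ih => exact ih.trans (hc (s j))
  obtain ⟨i, j, hij, hle⟩ := (LG.wqo K (Option α)).exists_lt
    (f := fun i => (b (s i)).core) (fun i => NExt.core_cl _ K (fun a =>
      hK a _ ((hmono 0 i (Nat.zero_le i)).trans (hb (s i)))))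
  obtain ⟨D, h1, h2⟩ := NExt.amalg hN.pre _ _ hle
  exact hbc (s i) D h1 (((hmono (i + 1) j hij).trans (hb (s j))).trans h2)

theorem wap_of_good {V : Type} {N : SimpleGraph V} {n : ℤ} (hN : GoodN N n) :
    GraphWAP (fun _ G => ¬ Contains N G) := by
  intro α _ A hA
  obtain ⟨E, hE⟩ := exists_amalg_base hN (⟨α, inferInstance, A, hA, Embedding.refl⟩ : NExt N A)
  refine ⟨E.W, E.ft, E.G, E.e, E.nf, ?_⟩
  intro γ _ B hB δ _ C hC f g
  obtain ⟨D, ⟨f', hf'⟩, ⟨g', hg'⟩⟩ := hE ⟨γ, inferInstance, B, hB, f.comp E.e⟩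
    ⟨δ, inferInstance, C, hC, g.comp E.e⟩ ⟨f, fun _ => rfl⟩ ⟨g, fun _ => rfl⟩
  exact ⟨D.W, D.ft, D.G, D.nf, f', g', fun a => (hf' a).trans (hg' a).symm⟩

/-- If `N` is a near path (a path, or a path with one extra pendant vertex attached),
then the class of all finite `N`-free graphs has the weak amalgamation property. -/
theorem nearPathFree_wap (V : Type) [Fintype V] (N : SimpleGraph V)
    (hN : (∃ m : ℕ, Nonempty (N ≃g SimpleGraph.pathGraph m)) ∨
          (∃ (m : ℕ) (k : Fin m), Nonempty (N ≃g nearPath m k))) :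
    GraphWAP (fun _ G => ¬ Contains N G) := by
  rcases hN with ⟨m, ⟨e⟩⟩ | ⟨m, k, ⟨e⟩⟩
  · exact wap_of_good ((good_path m).of_iso e)
  · exact wap_of_good ((good_nearPath m k).of_iso e)
end

section
/- Let F be a finite collection of finite connected simple graphs that is homomorphism-closed, meaning: for every surjective graph homomorphism f : B → A with B ∈ F, there exists C ∈ F admitting an injective graph homomorphism into A. Then the class K(F) of all finite F-free graphs has the weak amalgamation property. -/
open SimpleGraph

/-- The partial patterns (sub-pattern `S` of `F i` together with a labelling relation to `α`)
realised in `G` over `e : α → W`. -/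
def Realised {ι : Type} {V : ι → Type} (F : ∀ i, SimpleGraph (V i)) {α W : Type}
    (G : SimpleGraph W) (e : α → W) : Set (Σ i, Set (V i) × Set (V i × α)) :=
  {t | ∃ h : (F t.1).induce t.2.1 →g G, ∀ (v : t.2.1) (a : α), (v.1, a) ∈ t.2.2 → h v = e a}

lemma realised_mono {ι : Type} {V : ι → Type} (F : ∀ i, SimpleGraph (V i)) {α W X : Type}
    (G : SimpleGraph W) (H : SimpleGraph X) (e : α → W) (f : G ↪g H) :
    Realised F G e ⊆ Realised F H (fun a => f (e a)) := by
  rintro t ⟨h, hh⟩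
  exact ⟨f.toHom.comp h, fun v a hva => congrArg f (hh v a hva)⟩

/-- With homomorphism-closedness, `F`-free graphs admit no homomorphism from members of `F`. -/
lemma no_hom {ι : Type} {V : ι → Type} (F : ∀ i, SimpleGraph (V i))
    (hclosed : ∀ (i : ι) (α : Type) (A : SimpleGraph α) (f : F i →g A),
      Function.Surjective f → ∃ j : ι, Contains (F j) A)
    {W : Type} (G : SimpleGraph W) (hG : ∀ i, ¬ Contains (F i) G) (i : ι) (φ : F i →g G) :
    False := by
  obtain ⟨j, k, hk⟩ := hclosed i (Set.range φ) (G.induce (Set.range φ))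
    ⟨fun v => ⟨φ v, v, rfl⟩, fun {a b} h => φ.map_rel h⟩ (by rintro ⟨_, v, rfl⟩; exact ⟨v, rfl⟩)
  exact hG j ⟨(Embedding.induce (Set.range φ)).toHom.comp k,
    fun a b h => hk (Subtype.ext h)⟩

/-- Free amalgam of `B` and `C` over common `α`. -/
lemma free_amalgam {α γ δ : Type} [Fintype γ] [Fintype δ] (B : SimpleGraph γ) (C : SimpleGraph δ)
    (p : α → γ) (q : α → δ) (hp : Function.Injective p) (hq : Function.Injective q)
    (hpq : ∀ a b, B.Adj (p a) (p b) ↔ C.Adj (q a) (q b)) :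
    ∃ (ε : Type) (_ : Fintype ε) (D : SimpleGraph ε) (f' : B ↪g D) (g' : C ↪g D),
      (∀ a, f' (p a) = g' (q a)) ∧
      (∀ x d, f' x = g' d → ∃ a, x = p a ∧ d = q a) ∧
      (∀ z, (∃ x, f' x = z) ∨ ∃ d, g' d = z) ∧
      (∀ u v, D.Adj u v → (∃ x y, B.Adj x y ∧ f' x = u ∧ f' y = v) ∨
        ∃ x y, C.Adj x y ∧ g' x = u ∧ g' y = v) := by
  classical
  let g0 : δ → γ ⊕ {d : δ // ¬ ∃ a, q a = d} := fun d =>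
    if h : ∃ a, q a = d then Sum.inl (p h.choose) else Sum.inr ⟨d, h⟩
  have g0q : ∀ a, g0 (q a) = Sum.inl (p a) := by
    intro a
    have h : ∃ b, q b = q a := ⟨a, rfl⟩
    have : h.choose = a := hq h.choose_spec
    simp only [g0, dif_pos h, this]
  have g0r : ∀ d (h : ¬ ∃ a, q a = d), g0 d = Sum.inr ⟨d, h⟩ := by
    intro d h
    simp only [g0, dif_neg h]
  have g0l : ∀ x d, Sum.inl x = g0 d → ∃ a, x = p a ∧ d = q a := by
    intro x d h
    by_cases hd : ∃ a, q a = d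
    · obtain ⟨a, rfl⟩ := hd
      rw [g0q] at h
      exact ⟨a, Sum.inl.inj h, rfl⟩
    · rw [g0r d hd] at h
      cases h
  have g0inj : Function.Injective g0 := by
    intro d d' h
    by_cases hd : ∃ a, q a = d
    · obtain ⟨a, rfl⟩ := hd
      rw [g0q] at h
      obtain ⟨b, hb, rfl⟩ := g0l _ _ h
      rw [hp hb]
    · by_cases hd' : ∃ a, q a = d'
      · obtain ⟨a, rfl⟩ := hd'
        rw [g0q] at h
        obtain ⟨b, hb, rfl⟩ := g0l _ _ h.symm
        rw [hp hb]
      · rw [g0r d hd, g0r d' hd'] at h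
        exact congrArg Subtype.val (Sum.inr.inj h)
  let D : SimpleGraph (γ ⊕ {d : δ // ¬ ∃ a, q a = d}) :=
    { Adj := fun u v => (∃ x y, B.Adj x y ∧ Sum.inl x = u ∧ Sum.inl y = v) ∨
        ∃ x y, C.Adj x y ∧ g0 x = u ∧ g0 y = v
      symm := ⟨by
        rintro u v (⟨x, y, h, hx, hy⟩ | ⟨x, y, h, hx, hy⟩)
        · exact Or.inl ⟨y, x, h.symm, hy, hx⟩
        · exact Or.inr ⟨y, x, h.symm, hy, hx⟩⟩
      loopless := ⟨by
        rintro u (⟨x, y, h, hx, hy⟩ | ⟨x, y, h, hx, hy⟩)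
        · exact h.ne (Sum.inl.inj (hx.trans hy.symm))
        · exact h.ne (g0inj (hx.trans hy.symm))⟩ }
  have hD : ∀ u v, D.Adj u v ↔ (∃ x y, B.Adj x y ∧ Sum.inl x = u ∧ Sum.inl y = v) ∨
        ∃ x y, C.Adj x y ∧ g0 x = u ∧ g0 y = v := fun _ _ => Iff.rfl
  refine ⟨_, inferInstance, D, ⟨⟨Sum.inl, Sum.inl_injective⟩, ?_⟩, ⟨⟨g0, g0inj⟩, ?_⟩,
    fun a => (g0q a).symm, g0l, ?_, fun u v => (hD u v).1⟩
  · intro x y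
    change D.Adj (Sum.inl x) (Sum.inl y) ↔ _
    rw [hD]
    constructor
    · rintro (⟨x', y', h, hx, hy⟩ | ⟨c, d, h, hx, hy⟩)
      · cases hx; cases hy; exact h
      · obtain ⟨a, rfl, rfl⟩ := g0l _ _ hx.symm
        obtain ⟨b, rfl, rfl⟩ := g0l _ _ hy.symm
        exact (hpq a b).2 h
    · exact fun h => Or.inl ⟨x, y, h, rfl, rfl⟩
  · intro x y
    change D.Adj (g0 x) (g0 y) ↔ _
    rw [hD]
    constructor
    · rintro (⟨c, d, h, hx, hy⟩ | ⟨x', y', h, hx, hy⟩)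
      · obtain ⟨a, rfl, rfl⟩ := g0l _ _ hx
        obtain ⟨b, rfl, rfl⟩ := g0l _ _ hy
        exact (hpq a b).1 h
      · rw [← g0inj hx, ← g0inj hy]; exact h
    · exact fun h => Or.inr ⟨x, y, h, rfl, rfl⟩
  · rintro (x | ⟨d, hd⟩)
    · exact Or.inl ⟨x, rfl⟩
    · exact Or.inr ⟨d, g0r d hd⟩

/-- If `F` is a finite collection of finite connected graphs that is homomorphism-closed
(every surjective homomorphic image of a member of `F` contains some member of `F`),
then the class of all finite `F`-free graphs has the weak amalgamation property. -/
theorem homClosed_wap (ι : Type) [Fintype ι]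
    (V : ι → Type) (hVfin : ∀ i, Finite (V i))
    (F : ∀ i, SimpleGraph (V i))
    (hconn : ∀ i, (F i).Connected)
    (hclosed : ∀ (i : ι) (α : Type) (A : SimpleGraph α) (f : F i →g A),
      Function.Surjective f → ∃ j : ι, Contains (F j) A) :
    GraphWAP (fun _ G => ∀ i, ¬ Contains (F i) G) := by
  classical
  intro α _ A hA
  let 𝒮 : Set (Set (Σ i, Set (V i) × Set (V i × α))) :=
    {R | ∃ (β : Type) (_ : Fintype β) (A' : SimpleGraph β) (i : A ↪g A'),
      (∀ j, ¬ Contains (F j) A') ∧ Realised F A' i = R}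
  have hne : 𝒮.Nonempty := ⟨_, α, inferInstance, A, Embedding.refl, hA, rfl⟩
  obtain ⟨R, hR⟩ := (Set.toFinite 𝒮).exists_maximal hne
  obtain ⟨β, hβ, A', i, hA', hRe⟩ := hR.prop
  refine ⟨β, hβ, A', i, hA', ?_⟩
  intro γ _ B hB δ _ C hC f g
  have hCR : Realised F C (fun a => g (i a)) ⊆ Realised F A' i := by
    have h1 := realised_mono F A' C i g
    rw [hRe] at h1 ⊢
    exact hR.le_of_ge ⟨δ, inferInstance, C, g.comp i, hC, rfl⟩ h1
  obtain ⟨ε, hε, D, f', g', hfg, hint, hcov, hadj⟩ := free_amalgam B C (fun a => f (i a))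
    (fun a => g (i a)) (fun a b h => i.injective (f.injective h))
    (fun a b h => i.injective (g.injective h))
    (fun a b => by rw [f.map_adj_iff, g.map_adj_iff])
  refine ⟨ε, hε, D, ?_, f', g', hfg⟩
  rintro j ⟨φ, -⟩
  let S : Set (V j) := {v | ∃ d, g' d = φ v}
  let r : Set (V j × α) := {t | φ t.1 = f' (f (i t.2))}
  have hmem : (⟨j, S, r⟩ : Σ i, Set (V i) × Set (V i × α)) ∈
      Realised F C (fun a => g (i a)) := by
    have hs : ∀ v : S, ∃ d, g' d = φ v := fun v => v.2
    choose k hk using hs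
    refine ⟨⟨k, ?_⟩, ?_⟩
    · intro u v huv
      have : D.Adj (φ u) (φ v) := φ.map_rel huv
      rw [← hk, ← hk] at this
      exact g'.map_adj_iff.1 this
    · intro v a hva
      apply g'.injective
      exact ((hk v).trans hva).trans (hfg a)
  obtain ⟨h, hh⟩ := hCR hmem
  have hψ : ∀ v, ∃ y, (∀ x, f' x = φ v → y = x) ∧ (∀ hv : v ∈ S, y = f (h ⟨v, hv⟩)) := by
    intro v
    by_cases hv : v ∈ S
    · refine ⟨f (h ⟨v, hv⟩), ?_, fun _ => rfl⟩
      intro x hx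
      obtain ⟨d, hd⟩ := id hv
      obtain ⟨a, rfl, rfl⟩ := hint x d (hx.trans hd.symm)
      exact congrArg f (hh ⟨v, hv⟩ a hx.symm)
    · rcases hcov (φ v) with ⟨x, hx⟩ | hd
      · exact ⟨x, fun y hy => f'.injective (hx.trans hy.symm), fun hv' => absurd hv' hv⟩
      · exact absurd hd hv
  choose ψ hψ1 hψ2 using hψ
  refine no_hom F hclosed B hB j ⟨ψ, ?_⟩
  intro u v huv
  rcases hadj _ _ (φ.map_rel huv) with ⟨x, y, hxy, hx, hy⟩ | ⟨x, y, hxy, hx, hy⟩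
  · rw [hψ1 u x hx, hψ1 v y hy]; exact hxy
  · rw [hψ2 u ⟨x, hx⟩, hψ2 v ⟨y, hy⟩]
    exact f.map_adj_iff.2 (h.map_rel huv)
end

section
/- Let K_linear be the class of all finite simple graphs each of whose connected components is a path (i.e., finite disjoint unions of path graphs). Then K_linear has the cofinal amalgamation property. -/
open SimpleGraph

/-- The class of finite graphs satisfying `P` has the cofinal amalgamation property (CAP):
for every finite `A` with `P A` there are a finite `A'` with `P A'` and a graph embedding
of `A` into `A'` such that any two finite extensions `B`, `C` of `A'` in the class
amalgamate over all of `A'`. -/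
def GraphCAP (P : ∀ α : Type, SimpleGraph α → Prop) : Prop :=
  ∀ (α : Type) [Fintype α], ∀ A : SimpleGraph α, P α A →
    ∃ (β : Type) (_ : Fintype β) (A' : SimpleGraph β) (_ : A ↪g A'), P β A' ∧
      ∀ (γ : Type) [Fintype γ], ∀ B : SimpleGraph γ, P γ B →
        ∀ (δ : Type) [Fintype δ], ∀ C : SimpleGraph δ, P δ C →
          ∀ (f : A' ↪g B) (g : A' ↪g C),
            ∃ (ε : Type) (_ : Fintype ε) (D : SimpleGraph ε), P ε D ∧
              ∃ (f' : B ↪g D) (g' : C ↪g D),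
                ∀ a : β, f' (f a) = g' (g a)

/-- A graph is a disjoint union of paths if each of its connected components,
as an induced subgraph, is isomorphic to a path graph. -/
def IsDisjointUnionOfPaths {α : Type} (G : SimpleGraph α) : Prop :=
  ∀ c : G.ConnectedComponent, ∃ n : ℕ,
    Nonempty ((G.induce c.supp) ≃g SimpleGraph.pathGraph n)

/-- The two-way infinite path on the integers. -/
def intPath : SimpleGraph ℤ where
  Adj x y := x + 1 = y ∨ y + 1 = x
  symm := ⟨fun _ _ h => h.symm⟩
  loopless := ⟨fun _ h => by omega⟩

lemma intPath_adj (x y : ℤ) : intPath.Adj x y ↔ x + 1 = y ∨ y + 1 = x := Iff.rfl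

/-- Build an embedding into the integer path. -/
def mkEmb {α : Type} {G : SimpleGraph α} (h : α → ℤ) (hi : Function.Injective h)
    (ha : ∀ u v, G.Adj u v ↔ (h u + 1 = h v ∨ h v + 1 = h u)) : G ↪g intPath :=
  ⟨⟨h, hi⟩, fun {u v} => (ha u v).symm⟩

lemma emb_int {γ : Type} [Fintype γ] (B : SimpleGraph γ) (hB : IsDisjointUnionOfPaths B) :
    Nonempty (B ↪g intPath) := by
  classical
  choose n hn using hB
  let φ := fun c => (hn c).some
  let p : γ → ℕ := fun v => (φ (B.connectedComponentMk v) ⟨v, rfl⟩).val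
  have hp : ∀ c (v : γ) (hv : v ∈ c.supp), p v = (φ c ⟨v, hv⟩).val := by
    intro c v hv
    have : B.connectedComponentMk v = c := hv
    subst this
    rfl
  have hpi : ∀ u v, B.connectedComponentMk u = B.connectedComponentMk v → p u = p v → u = v := by
    intro u v h e
    rw [hp _ u rfl, hp _ v h.symm] at e
    have := (φ (B.connectedComponentMk u)).injective (Fin.ext e)
    exact congrArg Subtype.val this
  have hpa : ∀ u v, B.connectedComponentMk u = B.connectedComponentMk v →
      (B.Adj u v ↔ (p u + 1 = p v ∨ p v + 1 = p u)) := by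
    intro u v h
    rw [hp _ u rfl, hp _ v h.symm]
    rw [← pathGraph_adj, (φ (B.connectedComponentMk u)).map_adj_iff]
    simp
  obtain ⟨M, hM⟩ : ∃ M : ℕ, ∀ v, p v + 2 ≤ M :=
    ⟨Finset.univ.sup (fun v => p v + 2),
      fun v => Finset.le_sup (f := fun v => p v + 2) (Finset.mem_univ v)⟩
  have : Finite B.ConnectedComponent := Quot.finite _
  obtain ⟨N, ⟨k⟩⟩ := Finite.exists_equiv_fin B.ConnectedComponent
  let kk : γ → ℤ := fun v => ((k (B.connectedComponentMk v)).val : ℤ)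
  have hk : ∀ u v, kk u = kk v → B.connectedComponentMk u = B.connectedComponentMk v := by
    intro u v h
    apply k.injective
    apply Fin.ext
    exact Int.ofNat.inj h
  let h : γ → ℤ := fun v => p v + M * kk v
  have key : ∀ u v, h u ≤ h v + 1 → h v ≤ h u + 1 →
      B.connectedComponentMk u = B.connectedComponentMk v ∧ h u - h v = p u - p v := by
    intro u v h1 h2
    have hu := hM u
    have hv := hM v
    have e : kk u = kk v := by
      simp only [h] at h1 h2
      zify at hu hv
      rcases lt_trichotomy (kk u) (kk v) with hlt | heq | hlt
      · nlinarith
      · exact heq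
      · nlinarith
    refine ⟨hk _ _ e, ?_⟩
    simp only [h, e]; ring
  refine ⟨mkEmb h ?_ ?_⟩
  · intro u v e
    obtain ⟨h1, h2⟩ := key u v (by omega) (by omega)
    exact hpi u v h1 (by omega)
  · intro u v
    constructor
    · intro ha
      have hc : B.connectedComponentMk u = B.connectedComponentMk v :=
        ConnectedComponent.sound ha.reachable
      have := (hpa u v hc).1 ha
      have e : kk u = kk v := by simp only [kk, hc]
      simp only [h, e]
      omega
    · intro ha
      obtain ⟨h1, h2⟩ := key u v (by omega) (by omega)
      exact (hpa u v h1).2 (by omega)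

lemma path_emb {n : ℕ} (e : pathGraph n ↪g intPath) :
    ∃ (s a : ℤ), (s = 1 ∨ s = -1) ∧ ∀ i : Fin n, e i = a + s * i.val := by
  by_cases hn : n < 2
  · by_cases h0 : 0 < n
    · refine ⟨1, e ⟨0, h0⟩, Or.inl rfl, fun i => ?_⟩
      have : i = ⟨0, h0⟩ := Fin.ext (by have := i.2; simp; omega)
      simp [this]
    · exact ⟨1, 0, Or.inl rfl, fun i => absurd i.2 (by omega)⟩
  have step : ∀ i (h : i + 1 < n), e ⟨i, by omega⟩ + 1 = e ⟨i+1, h⟩ ∨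
      e ⟨i+1, h⟩ + 1 = e ⟨i, by omega⟩ := by
    intro i h
    rw [← intPath_adj, e.map_adj_iff, pathGraph_adj]
    simp
  have inj : ∀ i (h : i + 2 < n), e ⟨i, by omega⟩ ≠ e ⟨i+2, h⟩ := by
    intro i h hh
    have := e.injective hh
    simp at this
  have h2 : 1 < n := by omega
  refine ⟨e ⟨1, h2⟩ - e ⟨0, by omega⟩, e ⟨0, by omega⟩, by have := step 0 h2; simp at this; omega, ?_⟩
  set s := e ⟨1, h2⟩ - e ⟨0, by omega⟩ with hs
  have main : ∀ i (h : i + 1 < n), e ⟨i, by omega⟩ = e ⟨0, by omega⟩ + s * i ∧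
      e ⟨i+1, h⟩ = e ⟨0, by omega⟩ + s * (i+1) := by
    intro i
    induction i with
    | zero => intro h; simp [hs]
    | succ i ih =>
      intro h
      obtain ⟨a1, a2⟩ := ih (by omega)
      have b1 := step i (by omega)
      have b2 := step (i+1) h
      have b3 := inj i h
      have a3 : s * ((i:ℤ) + 1) = s * i + s := by ring
      have a4 : s * ((i:ℤ) + 1 + 1) = s * i + s + s := by ring
      push_cast
      refine ⟨a2, ?_⟩
      rw [a4]
      rw [a3] at a2
      change _ ≠ e ⟨i+1+1, h⟩ at b3
      omega
  rintro ⟨i, hi⟩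
  rcases i with _ | i
  · simp
  · simpa using (main i hi).2

lemma emb_over {n : ℕ} {γ : Type} [Fintype γ] (B : SimpleGraph γ)
    (hB : IsDisjointUnionOfPaths B) (f : pathGraph n ↪g B) :
    ∃ h : B ↪g intPath, ∀ i, h (f i) = i.val := by
  obtain ⟨h⟩ := emb_int B hB
  obtain ⟨s, a, hs, hf⟩ := path_emb (f.trans h)
  have hf' : ∀ i, h (f i) = a + s * i.val := hf
  refine ⟨mkEmb (fun v => s * (h v - a)) ?_ ?_, ?_⟩
  · intro u v e
    apply h.injective
    change s * (h u - a) = s * (h v - a) at e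
    rcases hs with rfl | rfl <;> omega
  · intro u v
    rw [← h.map_adj_iff, intPath_adj]
    rcases hs with rfl | rfl <;> omega
  · intro i
    change s * (h (f i) - a) = _
    rw [hf']
    rcases hs with rfl | rfl <;> ring

/-- A bounded embedding into the integer path lands in a finite path. -/
def toPath {α : Type} {G : SimpleGraph α} (h : G ↪g intPath) (N : ℕ) (hN : ∀ v, |h v| ≤ N) :
    G ↪g pathGraph (2 * N + 1) :=
  ⟨⟨fun v => ⟨(h v + N).toNat, by have := abs_le.1 (hN v); omega⟩, by
    intro u v e
    apply h.injective
    have h1 := abs_le.1 (hN u)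
    have h2 := abs_le.1 (hN v)
    have := congrArg Fin.val e
    simp only at this
    omega⟩, by
    intro u v
    have h1 := abs_le.1 (hN u)
    have h2 := abs_le.1 (hN v)
    rw [← h.map_adj_iff, intPath_adj, pathGraph_adj]
    change ((h u + N).toNat + 1 = (h v + N).toNat ∨ (h v + N).toNat + 1 = (h u + N).toNat) ↔ _
    omega⟩

lemma bounded {α : Type} [Fintype α] (h : α → ℤ) : ∃ N : ℕ, ∀ v, |h v| ≤ N :=
  ⟨Finset.univ.sup (fun v => (h v).natAbs), fun v => by
    have := Finset.le_sup (f := fun v => (h v).natAbs) (Finset.mem_univ v)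
    rw [Int.abs_eq_natAbs]
    exact_mod_cast this⟩

lemma path_isUnion (n : ℕ) : IsDisjointUnionOfPaths (pathGraph (n + 1)) := by
  intro c
  have : c.supp = Set.univ := by
    ext v
    simp only [Set.mem_univ, iff_true]
    induction c using ConnectedComponent.ind with
    | h w => exact ConnectedComponent.sound ((pathGraph_connected n).preconnected v w)
  rw [this]
  exact ⟨n + 1, ⟨induceUnivIso _⟩⟩

/-- The class of all finite disjoint unions of paths has the cofinal amalgamation
property. -/
theorem linear_cap : GraphCAP (fun _ G => IsDisjointUnionOfPaths G) := by
  intro α _ A hA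
  obtain ⟨h⟩ := emb_int A hA
  obtain ⟨N, hN⟩ := bounded h
  refine ⟨Fin (2 * N + 1), inferInstance, pathGraph _, toPath h N hN, path_isUnion _, ?_⟩
  intro γ _ B hB δ _ C hC f g
  obtain ⟨p, hp⟩ := emb_over B hB f
  obtain ⟨q, hq⟩ := emb_over C hC g
  obtain ⟨P, hP⟩ := bounded p
  obtain ⟨Q, hQ⟩ := bounded q
  have hP' : ∀ v, |p v| ≤ ((P + Q : ℕ) : ℤ) := fun v => (hP v).trans (by push_cast; omega)
  have hQ' : ∀ v, |q v| ≤ ((P + Q : ℕ) : ℤ) := fun v => (hQ v).trans (by push_cast; omega)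
  refine ⟨Fin (2 * (P + Q) + 1), inferInstance, pathGraph _, path_isUnion _,
    toPath p _ hP', toPath q _ hQ', ?_⟩
  intro a
  apply Fin.ext
  change (p (f a) + _).toNat = (q (g a) + _).toNat
  rw [hp, hq]
end
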